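/- arXiv:2310.09845 — 5 statements merged into one kernel-verified Lean document; each statement's English description precedes it below -/
import Mathlib

section
/- Let n ≤ m be positive integers, x̂ ∈ ℝᵐ, δ > 0, and let F : x̂ + B_m(δ) → ℝⁿ be a continuous function that is differentiable at x̂. If the differential dF(x̂) : ℝᵐ → ℝⁿ is surjective, then there exists r > 0 such that F(x̂ + B_m(δ)) ⊇ F(x̂) + B_n(r). -/
open Set Metric

/-- Evaluation at `1` of polynomials of bounded degree is a fixed combination of evaluations at
small nodes. -/
lemma om_interp (n : ℕ) (ε : ℝ) (hε : 0 < ε) :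
    ∃ (c v : ℕ → ℝ), (∀ i, 0 < v i ∧ v i < ε) ∧
      ∀ p : Polynomial ℝ, p.natDegree ≤ n →
        p.eval 1 = ∑ i ∈ Finset.range (n + 1), c i * p.eval (v i) := by
  let v : ℕ → ℝ := fun i => ε / ((i : ℝ) + 2)
  refine ⟨fun i => (Lagrange.basis (Finset.range (n + 1)) v i).eval 1, v, ?_, ?_⟩
  · intro i
    have h : (0 : ℝ) ≤ i := Nat.cast_nonneg i
    refine ⟨by positivity, ?_⟩
    change ε / ((i : ℝ) + 2) < ε
    rw [div_lt_iff₀ (by positivity)]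
    nlinarith
  · intro p hp
    have hinj : Set.InjOn v (Finset.range (n + 1)) := by
      intro i _ j _ hij
      change ε / ((i : ℝ) + 2) = ε / ((j : ℝ) + 2) at hij
      rw [div_eq_div_iff (by positivity) (by positivity)] at hij
      have := mul_left_cancel₀ hε.ne' hij
      have h2 : (i : ℝ) = j := by linarith
      exact_mod_cast h2
    have hdeg : p.degree < ((Finset.range (n + 1)).card : WithBot ℕ) := by
      rw [Finset.card_range]
      refine lt_of_le_of_lt Polynomial.degree_le_natDegree ?_
      exact_mod_cast Nat.lt_succ_of_le hp
    have h := Lagrange.eq_interpolate hinj hdeg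
    conv_lhs => rw [h]
    rw [Lagrange.interpolate_apply, Polynomial.eval_finsetSum]
    refine Finset.sum_congr rfl fun i _ => ?_
    rw [Polynomial.eval_mul, Polynomial.eval_C, mul_comm]

lemma om_detpoly {n : ℕ} (A : EuclideanSpace ℝ (Fin n) →L[ℝ] EuclideanSpace ℝ (Fin n)) :
    ∃ p : Polynomial ℝ, p.natDegree ≤ n ∧
      ∀ t : ℝ, p.eval t = (ContinuousLinearMap.id ℝ (EuclideanSpace ℝ (Fin n)) + t • A).det := by
  let b := (EuclideanSpace.basisFun (Fin n) ℝ).toBasis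
  let M := LinearMap.toMatrix b b (A : EuclideanSpace ℝ (Fin n) →ₗ[ℝ] EuclideanSpace ℝ (Fin n))
  refine ⟨((Polynomial.X : Polynomial ℝ) • M.map Polynomial.C +
      (1 : Matrix (Fin n) (Fin n) ℝ).map Polynomial.C).det,
    ?_, ?_⟩
  · simpa using Polynomial.natDegree_det_X_add_C_le M 1
  · intro t
    rw [← Polynomial.coe_evalRingHom, RingHom.map_det, ContinuousLinearMap.det,
      ← LinearMap.det_toMatrix b]
    congr 1
    simp only [ContinuousLinearMap.toLinearMap_add, ContinuousLinearMap.toLinearMap_smul, map_add,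
      map_smul]
    ext i j
    by_cases hij : i = j
    · simp [M, Matrix.one_apply, hij]; ring
    · simp [M, Matrix.one_apply, hij]; ring

lemma om_detpos {n : ℕ} (A : EuclideanSpace ℝ (Fin n) →L[ℝ] EuclideanSpace ℝ (Fin n))
    (t K : ℝ) (ht : 0 ≤ t) (hA : ‖A‖ ≤ K) (htK : t * K < 1) :
    0 < (ContinuousLinearMap.id ℝ (EuclideanSpace ℝ (Fin n)) + t • A).det := by
  obtain ⟨p, -, hp⟩ := om_detpoly A
  rw [← hp]
  by_contra hneg
  push Not at hneg
  have h0 : p.eval 0 = 1 := by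
    rw [hp]; simp [ContinuousLinearMap.det]
  have hivt := intermediate_value_Icc' ht (f := fun s => p.eval s) p.continuous.continuousOn
  obtain ⟨s, hs, hs0⟩ := hivt (show (0 : ℝ) ∈ _ from ⟨hneg, by simp [h0]⟩)
  simp only [hp] at hs0
  obtain ⟨x, hx, hx0⟩ := (LinearMap.bot_lt_ker_of_det_eq_zero hs0).ne' |>
    (Submodule.ne_bot_iff _).1
  have hx1 : x + s • A x = 0 := by simpa using hx
  have hxn : 0 < ‖x‖ := norm_pos_iff.2 hx0
  have h1 : ‖x‖ = s * ‖A x‖ := by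
    rw [eq_neg_of_add_eq_zero_left hx1, norm_neg, norm_smul, Real.norm_of_nonneg hs.1]
    rw [← eq_neg_of_add_eq_zero_left hx1] 
  have h2 : ‖A x‖ ≤ K * ‖x‖ := (A.le_opNorm x).trans (by gcongr)
  have hK : 0 ≤ K := (norm_nonneg _).trans hA
  have h3 : s * ‖A x‖ ≤ t * (K * ‖x‖) := by
    have := hs.1; have := hs.2
    gcongr
  nlinarith

/-- A Lipschitz map on a closed ball that vanishes on the sphere extends by zero. -/
lemma om_glue {n : ℕ} (R : ℝ) (F : EuclideanSpace ℝ (Fin n) → EuclideanSpace ℝ (Fin n))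
    (K : NNReal) (hF : LipschitzOnWith K F (closedBall 0 R)) (hR : 0 < R)
    (h0 : ∀ x, R ≤ ‖x‖ → F x = 0) : LipschitzWith K F := by
  have key : ∀ x y, ‖x‖ ≤ R → R ≤ ‖y‖ → dist (F x) (F y) ≤ K * dist x y := by
    intro x y hx hy
    let γ : ℝ → EuclideanSpace ℝ (Fin n) := fun s => AffineMap.lineMap x y s
    have hγ : Continuous γ := AffineMap.lineMap_continuous
    obtain ⟨s, hs, hsR⟩ := intermediate_value_Icc (zero_le_one' ℝ) (f := fun s => ‖γ s‖)
      hγ.norm.continuousOn (show R ∈ _ from ⟨by simpa [γ] using hx, by simpa [γ] using hy⟩)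
    have hsR : ‖γ s‖ = R := hsR
    have e : F y = F (γ s) := by rw [h0 y hy, h0 _ hsR.ge]
    rw [e]
    refine (hF.dist_le_mul x (by simpa using hx) (γ s) (by simpa using hsR.le)).trans ?_
    have : dist x (γ s) ≤ dist x y := by
      simp only [γ, dist_left_lineMap, Real.norm_of_nonneg hs.1]
      nlinarith [hs.2, dist_nonneg (x := x) (y := y)]
    gcongr
  refine LipschitzWith.of_dist_le_mul fun x y => ?_
  rcases le_total ‖x‖ R with hx | hx <;> rcases le_total ‖y‖ R with hy | hy
  · exact hF.dist_le_mul x (by simpa using hx) y (by simpa using hy)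
  · exact key x y hx hy
  · rw [dist_comm (F x), dist_comm x]; exact key y x hy hx
  · rw [h0 x hx, h0 y hy, dist_self]; positivity

/-- Small perturbations of the identity preserve the ball. -/
lemma om_image {n : ℕ} (R : ℝ) (H : EuclideanSpace ℝ (Fin n) → EuclideanSpace ℝ (Fin n))
    (K : NNReal) (hH : LipschitzWith K H)
    (h0 : ∀ x, R ≤ ‖x‖ → H x = 0) (t : ℝ) (ht : 0 ≤ t) (htK : t * K < 1) :
    Function.Injective (fun x => x + t • H x) ∧
      (fun x => x + t • H x) '' ball 0 R = ball 0 R := by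
  have hinj : Function.Injective (fun x => x + t • H x) := by
    intro x y hxy
    have hxy : x + t • H x = y + t • H y := hxy
    have h1 : x - y = t • (H y - H x) := by
      rw [smul_sub]
      exact sub_eq_sub_iff_add_eq_add.2 (by rw [hxy, add_comm])
    have h2 : dist x y ≤ t * (K * dist x y) := by
      have h4 : dist x y = t * dist (H x) (H y) := by
        rw [dist_eq_norm x y, h1, norm_smul, Real.norm_of_nonneg ht, dist_comm, dist_eq_norm]
      refine h4.le.trans ?_
      gcongr
      exact hH.dist_le_mul x y
    have h3 : dist x y ≤ 0 := by nlinarith [dist_nonneg (x := x) (y := y)]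
    exact dist_le_zero.1 h3
  have hsurj : Function.Surjective (fun x => x + t • H x) := by
    intro y
    let k : NNReal := ⟨t, ht⟩ * K
    have hc : ContractingWith k (fun x => y - t • H x) := by
      refine ⟨by exact_mod_cast htK, LipschitzWith.of_dist_le_mul fun a b => ?_⟩
      rw [dist_sub_left, dist_smul₀, Real.norm_of_nonneg ht]
      have := hH.dist_le_mul a b
      change t * _ ≤ t * K * _
      rw [mul_assoc]
      gcongr
    have hfp := hc.fixedPoint_isFixedPt
    refine ⟨ContractingWith.fixedPoint _ hc, ?_⟩
    have e : y - t • H (ContractingWith.fixedPoint _ hc) = ContractingWith.fixedPoint _ hc := hfp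
    exact (sub_eq_iff_eq_add.1 e).symm
  have hout : ∀ x, R ≤ ‖x‖ → x + t • H x = x := fun x hx => by rw [h0 x hx]; simp
  refine ⟨hinj, Subset.antisymm ?_ ?_⟩
  · rintro _ ⟨x, hx, rfl⟩
    rw [mem_ball_zero_iff] at hx ⊢
    by_contra hc
    push Not at hc
    have := hinj (hout _ hc)
    simp only at this
    rw [this] at hc
    linarith
  · intro y hy
    obtain ⟨x, rfl⟩ := hsurj y
    refine ⟨x, ?_, rfl⟩
    rw [mem_ball_zero_iff] at hy ⊢
    by_contra hc
    push Not at hc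
    simp only [hout x hc] at hy
    linarith

/-- No nonvanishing `C¹` map is the identity outside of a ball. -/
lemma om_core {n : ℕ} (hn : 0 < n) (R : ℝ) (hR : 0 < R)
    (v : EuclideanSpace ℝ (Fin n) → EuclideanSpace ℝ (Fin n)) (hv : ContDiff ℝ 1 v)
    (hne : ∀ x, v x ≠ 0) (hid : ∀ x, R ≤ ‖x‖ → v x = x) : False := by
  let f : EuclideanSpace ℝ (Fin n) → EuclideanSpace ℝ (Fin n) := fun x => (R * ‖v x‖⁻¹) • v x
  have hf : ContDiff ℝ 1 f :=
    (contDiff_const.mul ((hv.norm ℝ hne).inv fun x => norm_ne_zero_iff.2 (hne x))).smul hv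
  have hfn : ∀ x, ‖f x‖ = R := by
    intro x
    have := norm_pos_iff.2 (hne x)
    simp only [f, norm_smul, norm_mul, norm_inv, norm_norm, Real.norm_of_nonneg hR.le]
    field_simp
  let F : EuclideanSpace ℝ (Fin n) → EuclideanSpace ℝ (Fin n) := fun x => f x - x
  have hF : ContDiff ℝ 1 F := hf.sub contDiff_id
  have hFs : ∀ x, ‖x‖ = R → F x = 0 := by
    intro x hx
    simp only [F, f, hid x hx.ge, hx, mul_inv_cancel₀ hR.ne', one_smul, sub_self]
  obtain ⟨K, hK⟩ := hF.contDiffOn.exists_lipschitzOnWith (s := closedBall 0 R) one_ne_zero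
    (convex_closedBall _ _) (isCompact_closedBall _ _)
  classical
  let H : EuclideanSpace ℝ (Fin n) → EuclideanSpace ℝ (Fin n) :=
    fun x => if ‖x‖ < R then F x else 0
  have hHF : ∀ x, ‖x‖ ≤ R → H x = F x := by
    intro x hx
    by_cases h : ‖x‖ < R
    · simp [H, h]
    · simp [H, h, hFs x (le_antisymm hx (not_lt.1 h))]
  have hH0 : ∀ x, R ≤ ‖x‖ → H x = 0 := fun x hx => by simp [H, not_lt.2 hx]
  have hH : LipschitzWith K H := by
    refine om_glue R H K ?_ hR hH0
    intro x hx y hy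
    rw [hHF x (by simpa using hx), hHF y (by simpa using hy)]
    exact hK hx hy
  have hDK : ∀ x ∈ ball (0 : EuclideanSpace ℝ (Fin n)) R, ‖fderiv ℝ F x‖ ≤ K := fun x hx =>
    norm_fderiv_le_of_lipschitzOn ℝ (Filter.mem_of_superset (isOpen_ball.mem_nhds hx)
      ball_subset_closedBall) hK
  let J : ℝ → EuclideanSpace ℝ (Fin n) → ℝ := fun t x =>
    (ContinuousLinearMap.id ℝ (EuclideanSpace ℝ (Fin n)) + t • fderiv ℝ F x).det
  have hJc : ∀ t, Continuous (J t) := by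
    intro t
    have h1 : Continuous (fderiv ℝ F) := hF.continuous_fderiv one_ne_zero
    exact ContinuousLinearMap.continuous_det.comp (continuous_const.add (h1.const_smul t))
  let μ : MeasureTheory.Measure (EuclideanSpace ℝ (Fin n)) := MeasureTheory.volume
  have hJi : ∀ t, MeasureTheory.IntegrableOn (J t) (ball 0 R) μ := fun t =>
    ((hJc t).continuousOn.integrableOn_compact (isCompact_closedBall 0 R)).mono_set
      ball_subset_closedBall
  have hvol : ∀ t : ℝ, 0 < t → t * K < 1 → ∫ x in ball 0 R, J t x ∂μ = μ.real (ball 0 R) := by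
    intro t ht htK
    obtain ⟨hinj, him⟩ := om_image R H K hH hH0 t ht.le htK
    have hd : ∀ x ∈ ball (0 : EuclideanSpace ℝ (Fin n)) R,
        HasFDerivWithinAt (fun x => x + t • H x)
          (ContinuousLinearMap.id ℝ (EuclideanSpace ℝ (Fin n)) + t • fderiv ℝ F x)
          (ball 0 R) x := by
      intro x hx
      have h1 : HasFDerivAt (fun x => x + t • F x)
          (ContinuousLinearMap.id ℝ (EuclideanSpace ℝ (Fin n)) + t • fderiv ℝ F x) x :=
        (hasFDerivAt_id x).add (((hF.differentiable one_ne_zero) x).hasFDerivAt.const_smul t)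
      refine h1.hasFDerivWithinAt.congr ?_ ?_
      · intro y hy
        simp only [hHF y (by simpa using (mem_ball_zero_iff.1 hy).le)]
      · simp only [hHF x (by simpa using (mem_ball_zero_iff.1 hx).le)]
    have hcv := MeasureTheory.integral_image_eq_integral_abs_det_fderiv_smul μ measurableSet_ball
      hd hinj.injOn (fun _ => (1 : ℝ))
    rw [him] at hcv
    have e : ∫ x in ball 0 R, J t x ∂μ = ∫ x in ball 0 R,
        |(ContinuousLinearMap.id ℝ (EuclideanSpace ℝ (Fin n)) + t • fderiv ℝ F x).det| • (1 : ℝ)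
          ∂μ := by
      refine MeasureTheory.setIntegral_congr_fun measurableSet_ball fun x hx => ?_
      simp only [smul_eq_mul, mul_one]
      exact (abs_of_pos (om_detpos _ t K ht.le (hDK x hx) htK)).symm
    rw [e, ← hcv]
    simp
  obtain ⟨c, w, hw, hcw⟩ := om_interp n (1 / (K + 1)) (by positivity)
  have hwK : ∀ i, w i * K < 1 := by
    intro i
    have h1 := (hw i).2
    rw [lt_div_iff₀ (by positivity)] at h1
    nlinarith [(hw i).1]
  have hsumc : ∑ i ∈ Finset.range (n + 1), c i = 1 := by
    have := hcw 1 (by simp)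
    simpa using this.symm
  have hJ1 : ∀ x, J 1 x = ∑ i ∈ Finset.range (n + 1), c i * J (w i) x := by
    intro x
    obtain ⟨p, hp, hpe⟩ := om_detpoly (fderiv ℝ F x)
    simp only [J, ← hpe]
    exact hcw p hp
  have htot : ∫ x in ball 0 R, J 1 x ∂μ = μ.real (ball 0 R) := by
    simp only [hJ1]
    rw [MeasureTheory.integral_finsetSum _ fun i _ => (hJi (w i)).const_mul (c i)]
    simp only [MeasureTheory.integral_const_mul, hvol _ (hw _).1 (hwK _)]
    rw [← Finset.sum_mul, hsumc, one_mul]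
  have hzero : ∀ x, J 1 x = 0 := by
    intro x
    have hdf : HasFDerivAt f (fderiv ℝ f x) x := ((hf.differentiable one_ne_zero) x).hasFDerivAt
    have e : ContinuousLinearMap.id ℝ (EuclideanSpace ℝ (Fin n)) + (1 : ℝ) • fderiv ℝ F x
        = fderiv ℝ f x := by
      have : HasFDerivAt F (fderiv ℝ f x - ContinuousLinearMap.id ℝ _) x :=
        hdf.sub (hasFDerivAt_id x)
      rw [this.fderiv]; simp
    simp only [J, e]
    by_contra hdet
    have hs : Function.Surjective (fderiv ℝ f x) := by
      have hu : IsUnit (LinearMap.det (fderiv ℝ f x : EuclideanSpace ℝ (Fin n) →ₗ[ℝ] _)) :=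
        isUnit_iff_ne_zero.2 hdet
      exact ((Module.End.isUnit_iff _).1 ((LinearMap.isUnit_iff_isUnit_det _).2 hu)).2
    obtain ⟨h, hh⟩ := hs (f x)
    have h2 := hdf.norm_sq
    have h3 : (fun y => ‖f y‖ ^ 2) = fun _ => R ^ 2 := by
      funext y; rw [hfn]
    rw [h3] at h2
    have h4 := h2.unique (hasFDerivAt_const (R ^ 2) x)
    have h5 := congrArg (fun L => L h) h4
    simp [hh, hfn, hR.ne'] at h5
  have hp : 0 < μ.real (ball 0 R) :=
    ENNReal.toReal_pos (measure_ball_pos μ 0 hR).ne' MeasureTheory.measure_ball_lt_top.ne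
  rw [← htot] at hp
  simp [hzero] at hp

lemma om_zero {n : ℕ} (hn : 0 < n) (R : ℝ) (hR : 0 < R)
    (u : EuclideanSpace ℝ (Fin n) → EuclideanSpace ℝ (Fin n))
    (hu : ContinuousOn u (closedBall 0 R)) (hux : ∀ x ∈ closedBall 0 R, ‖u x - x‖ ≤ R / 2) :
    ∃ x ∈ closedBall 0 R, u x = 0 := by
  by_contra hno
  push Not at hno
  obtain ⟨x0, hx0, hmin⟩ := (isCompact_closedBall (0 : EuclideanSpace ℝ (Fin n)) R).exists_isMinOn
    ⟨0, by simp [hR.le]⟩ hu.norm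
  obtain ⟨U, hU⟩ := ContinuousMap.exists_restrict_eq (isClosed_closedBall (x := 0) (ε := R))
    ⟨_, hu.domRestrict⟩
  have hUu : ∀ x ∈ closedBall 0 R, U x = u x := fun x hx =>
    congrArg (fun g : C(closedBall (0 : EuclideanSpace ℝ (Fin n)) R, _) => g ⟨x, hx⟩) hU
  have hcpos : 0 < min ‖u x0‖ (R / 4) :=
    lt_min (norm_pos_iff.2 (hno x0 hx0)) (by positivity)
  obtain ⟨w, hw, hwU, -⟩ := U.continuous.exists_contDiff_approx 1
    (ε := fun _ => min ‖u x0‖ (R / 4)) continuous_const (fun _ => hcpos)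
  have hwu : ∀ x ∈ closedBall 0 R, ‖w x - u x‖ < min ‖u x0‖ (R / 4) := by
    intro x hx
    have := hwU x
    rwa [hUu x hx, dist_eq_norm] at this
  let b : ContDiffBump (0 : EuclideanSpace ℝ (Fin n)) :=
    ⟨3 * R / 4, R, by positivity, by linarith⟩
  refine om_core hn R hR (fun x => x + b x • (w x - x)) ?_ ?_ ?_
  · have hw' : ContDiff ℝ 1 w := hw
    exact contDiff_id.add (b.contDiff.smul (hw'.sub contDiff_id))
  · intro x hx
    rcases le_or_gt ‖x‖ (3 * R / 4) with h | h
    · have hb : b x = 1 := b.one_of_mem_closedBall (by simpa [b] using h)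
      have hxm : x ∈ closedBall (0 : EuclideanSpace ℝ (Fin n)) R := by
        simp; linarith
      rw [hb, one_smul, add_sub_cancel] at hx
      have h1 := (hwu x hxm).trans_le (min_le_left _ _)
      rw [hx, zero_sub, norm_neg] at h1
      exact absurd (hmin hxm) (not_le.2 h1)
    · rcases le_or_gt R ‖x‖ with h' | h'
      · have hb : b x = 0 := b.zero_of_le_dist (by simpa [b] using h')
        rw [hb, zero_smul, add_zero] at hx
        rw [hx, norm_zero] at h; linarith
      · have hxm : x ∈ closedBall (0 : EuclideanSpace ℝ (Fin n)) R := by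
          simp; linarith
        have h1 := (hwu x hxm).trans_le (min_le_right _ _)
        have h2 : ‖w x - x‖ < 3 * R / 4 := by
          have := norm_sub_le_norm_sub_add_norm_sub (w x) (u x) x
          linarith [hux x hxm]
        have h3 : ‖x‖ = ‖b x • (w x - x)‖ := by
          rw [← norm_neg x, neg_eq_of_add_eq_zero_right hx]
        rw [norm_smul, Real.norm_of_nonneg b.nonneg] at h3
        nlinarith [b.le_one (x := x), b.nonneg (x := x), norm_nonneg (w x - x)]
  · intro x hx
    have hb : b x = 0 := b.zero_of_le_dist (by simpa [b] using hx)
    simp [hb]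

/-- Open Mapping theorem: if `F` is continuous on the closed ball `xhat + B_m(δ)` and
differentiable at `xhat` with surjective differential, then the image of the ball
contains a closed ball around `F xhat`. -/
theorem open_mapping {n m : ℕ} (hn : 0 < n) (hnm : n ≤ m)
    (xhat : EuclideanSpace ℝ (Fin m)) (δ : ℝ) (hδ : 0 < δ)
    (F : EuclideanSpace ℝ (Fin m) → EuclideanSpace ℝ (Fin n))
    (L : EuclideanSpace ℝ (Fin m) →L[ℝ] EuclideanSpace ℝ (Fin n))
    (hcont : ContinuousOn F (closedBall xhat δ))
    (hdiff : HasFDerivWithinAt F L (closedBall xhat δ) xhat)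
    (hsurj : Function.Surjective L) :
    ∃ r : ℝ, 0 < r ∧ closedBall (F xhat) r ⊆ F '' closedBall xhat δ := by
  obtain ⟨S, hS⟩ := L.exists_rightInverse_of_surjective (LinearMap.range_eq_top.2 hsurj)
  have hLS : ∀ x, L (S x) = x := fun x => congrArg (fun T => T x) hS
  have hd : HasFDerivAt F L xhat := hdiff.hasFDerivAt (closedBall_mem_nhds _ hδ)
  have hd0 : HasFDerivAt F L (xhat + S 0) := by simpa using hd
  have hg : HasFDerivAt (fun x => F (xhat + S x)) (L.comp S) 0 :=
    HasFDerivAt.comp (0 : EuclideanSpace ℝ (Fin n)) hd0 (S.hasFDerivAt.const_add xhat)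
  have ho := (hasFDerivAt_iff_isLittleO_nhds_zero.1 hg).def (show (0 : ℝ) < 1 / 4 by norm_num)
  obtain ⟨R₁, hR₁, hR₁'⟩ := Metric.eventually_nhds_iff_ball.1 ho
  let R := min (R₁ / 2) (δ / (‖S‖ + 1))
  have hR : 0 < R := lt_min (by positivity) (by positivity)
  have hmaps : ∀ x ∈ closedBall (0 : EuclideanSpace ℝ (Fin n)) R,
      xhat + S x ∈ closedBall xhat δ := by
    intro x hx
    rw [mem_closedBall_zero_iff] at hx
    rw [mem_closedBall, dist_eq_norm, add_sub_cancel_left]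
    have h1 : ‖x‖ ≤ δ / (‖S‖ + 1) := hx.trans (min_le_right _ _)
    rw [le_div_iff₀ (by positivity)] at h1
    have := S.le_opNorm x
    nlinarith [norm_nonneg x]
  refine ⟨R / 4, by positivity, fun y hy => ?_⟩
  rw [mem_closedBall, dist_eq_norm] at hy
  have hc : ContinuousOn (fun x => F (xhat + S x) - y) (closedBall 0 R) := by
    refine ContinuousOn.sub (hcont.comp ?_ hmaps) continuousOn_const
    exact (continuous_const.add S.continuous).continuousOn
  have hb : ∀ x ∈ closedBall (0 : EuclideanSpace ℝ (Fin n)) R,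
      ‖(fun x => F (xhat + S x) - y) x - x‖ ≤ R / 2 := by
    intro x hx
    have hx' := mem_closedBall_zero_iff.1 hx
    have h1 := hR₁' x (by
      rw [mem_ball_zero_iff]
      have := min_le_left (R₁ / 2) (δ / (‖S‖ + 1))
      change R ≤ _ at this
      linarith)
    simp only [zero_add, map_zero, add_zero, ContinuousLinearMap.comp_apply, hLS] at h1
    have e : F (xhat + S x) - y - x = (F (xhat + S x) - F xhat - x) - (y - F xhat) := by abel
    simp only [e]
    have := norm_sub_le (F (xhat + S x) - F xhat - x) (y - F xhat)
    linarith
  obtain ⟨x, hx, hx0⟩ := om_zero hn R hR _ hc hb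
  exact ⟨_, hmaps x hx, sub_eq_zero.1 hx0⟩
end

section
/- Let n be a positive integer, x̂ ∈ ℝⁿ, and let R > ρ > 0. Let φ : x̂ + B_n(R) → ℝⁿ be a continuous map that is ρ-close to the identity, i.e. |φ(x) − x| ≤ ρ for all x ∈ x̂ + B_n(R). Then φ(x̂ + B_n(R)) ⊇ x̂ + B_n(R − ρ). -/
open Set Metric

open MeasureTheory in
lemma bw_poly {n : ℕ} (h : EuclideanSpace ℝ (Fin n) → EuclideanSpace ℝ (Fin n))
    (hh : ContDiff ℝ 1 h) (L : ℝ) (N : ℕ) :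
    ∃ (d : ℕ) (a : ℕ → EuclideanSpace ℝ (Fin n) → ℝ), (∀ k, Continuous (a k)) ∧
      ∀ (t : ℝ) x, (L ^ 2 - ‖x + t • h x‖ ^ 2) ^ N *
        (ContinuousLinearMap.id ℝ _ + t • fderiv ℝ h x).det
          = ∑ k ∈ Finset.range d, a k x * t ^ k := by
  classical
  have hc : Continuous h := hh.continuous
  have hd : Continuous (fderiv ℝ h) := hh.continuous_fderiv (by norm_num)
  let b := (EuclideanSpace.basisFun (Fin n) ℝ).toBasis
  let A : Fin n → Fin n → C(EuclideanSpace ℝ (Fin n), ℝ) :=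
    fun i j => ⟨fun x => (fderiv ℝ h x (b j)) i, by fun_prop⟩
  let X : Fin n → C(EuclideanSpace ℝ (Fin n), ℝ) := fun i => ⟨fun x => x i, by fun_prop⟩
  let H : Fin n → C(EuclideanSpace ℝ (Fin n), ℝ) := fun i => ⟨fun x => h x i, by fun_prop⟩
  let D : Matrix (Fin n) (Fin n) (Polynomial C(EuclideanSpace ℝ (Fin n), ℝ)) :=
    Matrix.of fun i j => (if i = j then 1 else 0) + Polynomial.X * Polynomial.C (A i j)
  let Q : Polynomial C(EuclideanSpace ℝ (Fin n), ℝ) :=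
    (Polynomial.C (ContinuousMap.const _ (L ^ 2)) -
      ∑ i, (Polynomial.C (X i) + Polynomial.X * Polynomial.C (H i)) ^ 2) ^ N * D.det
  refine ⟨Q.natDegree + 1, fun k => Q.coeff k, fun k => (Q.coeff k).continuous, fun t x => ?_⟩
  let ev : C(EuclideanSpace ℝ (Fin n), ℝ) →+* ℝ :=
    { toFun := fun f => f x, map_one' := rfl, map_zero' := rfl,
      map_mul' := fun _ _ => rfl, map_add' := fun _ _ => rfl }
  let Φ : Polynomial C(EuclideanSpace ℝ (Fin n), ℝ) →+* ℝ := Polynomial.eval₂RingHom ev t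
  have h1 : Φ Q = ∑ k ∈ Finset.range (Q.natDegree + 1), Q.coeff k x * t ^ k := by
    simp only [Φ, Polynomial.coe_eval₂RingHom]
    rw [Polynomial.eval₂_eq_sum_range]
    rfl
  rw [← h1]
  have hX : Φ Polynomial.X = t := by simp [Φ]
  have hC : ∀ f, Φ (Polynomial.C f) = f x := fun f => by
    simp only [Φ, Polynomial.coe_eval₂RingHom, Polynomial.eval₂_C]
    rfl
  simp only [Q, map_mul, map_pow, map_sub, map_sum, map_add, hX, hC, RingHom.map_det]
  congr 1
  · rw [EuclideanSpace.real_norm_sq_eq]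
    simp [X, H]
  · rw [ContinuousLinearMap.det, ← LinearMap.det_toMatrix b]
    congr 1
    ext i j
    rw [LinearMap.toMatrix_apply]
    simp only [RingHom.mapMatrix_apply, Matrix.map_apply, D, Matrix.of_apply, map_add, map_mul, hX, hC]
    have : Φ (if i = j then 1 else 0) = if i = j then 1 else 0 := by split_ifs <;> simp
    rw [this]
    simp [b, A, Pi.single_apply]

lemma bw_bij {E : Type*} [NormedAddCommGroup E] [NormedSpace ℝ E] [CompleteSpace E]
    (g : E → E) (K : NNReal) (hK : K < 1) (hg : LipschitzWith K g) :
    Function.Bijective (fun x => x + g x) := by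
  constructor
  · intro a b hab
    by_contra hne
    have h1 : a - b = g b - g a := by
      have : a + g a = b + g b := hab
      rw [sub_eq_sub_iff_add_eq_add, this, add_comm]
    have h2 : dist a b ≤ K * dist a b := by
      calc dist a b = dist (g b) (g a) := by rw [dist_eq_norm, dist_eq_norm, h1]
        _ ≤ K * dist b a := hg.dist_le_mul _ _
        _ = _ := by rw [dist_comm]
    have h3 : 0 < dist a b := dist_pos.2 hne
    have h4 : (K : ℝ) < 1 := hK
    nlinarith
  · intro y
    have hc : ContractingWith K (fun x => y - g x) := by
      refine ⟨hK, LipschitzWith.of_dist_le_mul fun a b => ?_⟩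
      rw [dist_sub_left]
      exact hg.dist_le_mul _ _
    refine ⟨ContractingWith.fixedPoint _ hc, ?_⟩
    have := hc.fixedPoint_isFixedPt
    have h2 : y - g (ContractingWith.fixedPoint _ hc) = ContractingWith.fixedPoint _ hc := this
    show _ + _ = _
    nth_rewrite 1 [← h2]
    simp

open MeasureTheory in
lemma bw_integral {n : ℕ} (h : EuclideanSpace ℝ (Fin n) → EuclideanSpace ℝ (Fin n))
    (hh : ContDiff ℝ 1 h) (hs : HasCompactSupport h) (M : ℝ)
    (hM : ∀ x, x ∉ closedBall (0 : EuclideanSpace ℝ (Fin n)) M → h x = 0) (L : ℝ) (N : ℕ) :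
    ∫ x in closedBall (0 : EuclideanSpace ℝ (Fin n)) M, (L ^ 2 - ‖x + h x‖ ^ 2) ^ N *
        (ContinuousLinearMap.id ℝ _ + fderiv ℝ h x).det
      = ∫ x in closedBall (0 : EuclideanSpace ℝ (Fin n)) M, (L ^ 2 - ‖x‖ ^ 2) ^ N := by
  set B := closedBall (0 : EuclideanSpace ℝ (Fin n)) M with hB
  have hBc : IsCompact B := isCompact_closedBall _ _
  obtain ⟨d, a, ha, hQ⟩ := bw_poly h hh L N
  obtain ⟨C, hC⟩ := hh.lipschitzWith_of_hasCompactSupport hs (by norm_num)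
  let P : Polynomial ℝ := ∑ k ∈ Finset.range d, Polynomial.C (∫ x in B, a k x) * Polynomial.X ^ k
  have hP : ∀ t : ℝ, P.eval t = ∫ x in B, (L ^ 2 - ‖x + t • h x‖ ^ 2) ^ N *
        (ContinuousLinearMap.id ℝ _ + t • fderiv ℝ h x).det := by
    intro t
    simp_rw [hQ t]
    rw [integral_finsetSum]
    · simp only [P, Polynomial.eval_finsetSum, Polynomial.eval_mul, Polynomial.eval_C,
        Polynomial.eval_pow, Polynomial.eval_X, integral_mul_const]
    · intro k _
      exact ((ha k).mul continuous_const).continuousOn.integrableOn_compact hBc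
  -- positivity of determinants near the identity
  have hdet : ∃ δ > 0, ∀ T : EuclideanSpace ℝ (Fin n) →L[ℝ] EuclideanSpace ℝ (Fin n), ‖T‖ < δ →
      0 < (ContinuousLinearMap.id ℝ _ + T).det := by
    have hcd : Continuous fun T : EuclideanSpace ℝ (Fin n) →L[ℝ] EuclideanSpace ℝ (Fin n) =>
        (ContinuousLinearMap.id ℝ _ + T).det :=
      ContinuousLinearMap.continuous_det.comp (continuous_const.add continuous_id)
    have h0 : (0 : ℝ) < (ContinuousLinearMap.id ℝ (EuclideanSpace ℝ (Fin n)) + 0).det := by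
      rw [add_zero, ContinuousLinearMap.det]
      simp
    have := hcd.continuousAt.eventually (lt_mem_nhds h0)
    obtain ⟨δ, hδ, hb⟩ := Metric.eventually_nhds_iff.1 this
    exact ⟨δ, hδ, fun T hT => hb (by simpa using hT)⟩
  obtain ⟨δ, hδ, hdet⟩ := hdet
  have hsmall : ∀ t : ℝ, 0 < t → t * C < 1 → t * C < δ →
      P.eval t = ∫ x in B, (L ^ 2 - ‖x‖ ^ 2) ^ N := by
    intro t ht h1 h2
    rw [hP t]
    have hbij : Function.Bijective (fun x => x + t • h x) := by
      refine bw_bij (fun x => t • h x) (t.toNNReal * C) ?_ ?_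
      · rw [← NNReal.coe_lt_coe]; simpa [ht.le] using h1
      · refine LipschitzWith.of_dist_le_mul fun x y => ?_
        rw [dist_smul₀, Real.norm_of_nonneg ht.le]
        rw [NNReal.coe_mul, Real.coe_toNNReal _ ht.le, mul_assoc]
        exact mul_le_mul_of_nonneg_left (hC.dist_le_mul _ _) ht.le
    have himg : (fun x => x + t • h x) '' B = B := by
      have hout : ∀ x, x ∉ B → x + t • h x = x := fun x hx => by simp [hM x hx]
      ext y
      constructor
      · rintro ⟨x, hx, rfl⟩
        by_contra hy
        have := hout _ hy
        have := hbij.1 this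
        rw [this] at hy
        exact hy hx
      · intro hy
        obtain ⟨x, hx⟩ := hbij.2 y
        refine ⟨x, ?_, hx⟩
        by_contra hxB
        have := hout x hxB
        simp only at hx
        rw [this] at hx
        exact hxB (hx ▸ hy)
    have hder : ∀ x ∈ B, HasFDerivWithinAt (fun x => x + t • h x)
        (ContinuousLinearMap.id ℝ _ + t • fderiv ℝ h x) B x := fun x _ =>
      ((hasFDerivAt_id x).add
        (((hh.differentiable (by norm_num)) x).hasFDerivAt.const_smul t)).hasFDerivWithinAt
    have := integral_image_eq_integral_abs_det_fderiv_smul volume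
      (measurableSet_closedBall) hder hbij.1.injOn (fun y => (L ^ 2 - ‖y‖ ^ 2) ^ N)
    rw [himg] at this
    rw [this]
    refine setIntegral_congr_fun measurableSet_closedBall fun x _ => ?_
    simp only [smul_eq_mul]
    rw [abs_of_pos, mul_comm]
    apply hdet
    rw [norm_smul, Real.norm_of_nonneg ht.le]
    exact (mul_le_mul_of_nonneg_left (norm_fderiv_le_of_lipschitz ℝ hC) ht.le).trans_lt h2
  have hPeq : P = Polynomial.C (∫ x in B, (L ^ 2 - ‖x‖ ^ 2) ^ N) := by
    apply Polynomial.eq_of_infinite_eval_eq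
    set r : ℝ := min 1 δ / (C + 1) with hr
    have hC1 : (0 : ℝ) < C + 1 := by positivity
    have hrpos : 0 < r := by positivity
    refine (Set.Ioo_infinite hrpos).mono fun t ht => ?_
    have h3 : t * C < min 1 δ := by
      have : t * (C + 1) < min 1 δ := (lt_div_iff₀ hC1).1 ht.2
      nlinarith [ht.1]
    simp only [Set.mem_ofPred_eq, Polynomial.eval_C]
    exact hsmall t ht.1 (h3.trans_le (min_le_left _ _)) (h3.trans_le (min_le_right _ _))
  have := hP 1
  rw [hPeq] at this
  simpa using this.symm

open MeasureTheory in
lemma bw_zero {n : ℕ} (h : EuclideanSpace ℝ (Fin n) → EuclideanSpace ℝ (Fin n))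
    (hh : ContDiff ℝ 1 h) (hs : HasCompactSupport h) : ∃ x, x + h x = 0 := by
  by_contra! hne
  obtain ⟨M, hM0, hM⟩ : ∃ M : ℝ, 0 < M ∧ tsupport h ⊆ closedBall 0 M := by
    obtain ⟨M, hM⟩ := hs.isBounded.subset_closedBall 0
    exact ⟨max M 1, by positivity, hM.trans (closedBall_subset_closedBall (le_max_left _ _))⟩
  have hM' : ∀ x, x ∉ closedBall (0 : EuclideanSpace ℝ (Fin n)) M → h x = 0 := fun x hx =>
    image_eq_zero_of_notMem_tsupport fun hx' => hx (hM hx')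
  set B := closedBall (0 : EuclideanSpace ℝ (Fin n)) M with hB
  have hBc : IsCompact B := isCompact_closedBall _ _
  have hBne : B.Nonempty := ⟨0, by simp [hB, hM0.le]⟩
  have hc : Continuous h := hh.continuous
  have hd : Continuous (fderiv ℝ h) := hh.continuous_fderiv (by norm_num)
  have hfc : Continuous fun x => ‖x + h x‖ := by fun_prop
  obtain ⟨x0, -, hx0⟩ := hBc.exists_isMinOn hBne hfc.continuousOn
  obtain ⟨x1, -, hx1⟩ := hBc.exists_isMaxOn hBne hfc.continuousOn
  set ε := min ‖x0 + h x0‖ M with hε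
  have hεpos : 0 < ε := lt_min (norm_pos_iff.2 (hne _)) hM0
  set L := max ‖x1 + h x1‖ M with hL
  have hεM : ε ≤ M := min_le_right _ _
  have hML : M ≤ L := le_max_right _ _
  have hlow : ∀ x ∈ B, ε ≤ ‖x + h x‖ := fun x hx => (min_le_left _ _).trans (hx0 hx)
  have hup : ∀ x ∈ B, ‖x + h x‖ ≤ L := fun x hx => (hx1 hx).trans (le_max_left _ _)
  have hdc : Continuous fun x => (ContinuousLinearMap.id ℝ _ + fderiv ℝ h x).det :=
    ContinuousLinearMap.continuous_det.comp (continuous_const.add hd)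
  set C := ∫ x in B, |(ContinuousLinearMap.id ℝ _ + fderiv ℝ h x).det| with hC
  set S := closedBall (0 : EuclideanSpace ℝ (Fin n)) (ε / 2) with hS
  have hSB : S ⊆ B := closedBall_subset_closedBall (by linarith)
  set v := volume.real S with hv
  have hvpos : 0 < v := by
    apply ENNReal.toReal_pos
    · exact (measure_closedBall_pos volume _ (by positivity)).ne'
    · exact (isCompact_closedBall _ _).measure_lt_top.ne
  have ha0 : 0 ≤ L ^ 2 - ε ^ 2 := by nlinarith
  have hab : L ^ 2 - ε ^ 2 < L ^ 2 - (ε / 2) ^ 2 := by nlinarith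
  have key : ∀ N : ℕ, v * (L ^ 2 - (ε / 2) ^ 2) ^ N ≤ (L ^ 2 - ε ^ 2) ^ N * C := by
    intro N
    have hcont : Continuous fun x : EuclideanSpace ℝ (Fin n) => (L ^ 2 - ‖x‖ ^ 2) ^ N := by
      fun_prop
    calc v * (L ^ 2 - (ε / 2) ^ 2) ^ N = ∫ x in S, (L ^ 2 - (ε / 2) ^ 2) ^ N := by simp [hv]
      _ ≤ ∫ x in S, (L ^ 2 - ‖x‖ ^ 2) ^ N := by
        refine setIntegral_mono_on ?_ ?_ measurableSet_closedBall fun x hx => ?_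
        · exact continuous_const.continuousOn.integrableOn_compact (isCompact_closedBall _ _)
        · exact hcont.continuousOn.integrableOn_compact (isCompact_closedBall _ _)
        · have : ‖x‖ ≤ ε / 2 := by simpa [hS] using hx
          have : ‖x‖ ^ 2 ≤ (ε / 2) ^ 2 := by gcongr
          exact pow_le_pow_left₀ (by linarith) (by linarith) _
      _ ≤ ∫ x in B, (L ^ 2 - ‖x‖ ^ 2) ^ N := by
        refine setIntegral_mono_set (hcont.continuousOn.integrableOn_compact hBc) ?_
          hSB.eventuallyLE
        refine (ae_restrict_iff' measurableSet_closedBall).2 (Filter.Eventually.of_forall ?_)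
        intro x hx
        have : ‖x‖ ≤ L := le_trans (by simpa [hB] using hx) hML
        have : ‖x‖ ^ 2 ≤ L ^ 2 := by gcongr
        exact pow_nonneg (by linarith) _
      _ = ∫ x in B, (L ^ 2 - ‖x + h x‖ ^ 2) ^ N *
          (ContinuousLinearMap.id ℝ _ + fderiv ℝ h x).det :=
        (bw_integral h hh hs M hM' L N).symm
      _ ≤ ∫ x in B, (L ^ 2 - ε ^ 2) ^ N *
          |(ContinuousLinearMap.id ℝ _ + fderiv ℝ h x).det| := by
        refine setIntegral_mono_on ?_ ?_ measurableSet_closedBall fun x hx => ?_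
        · exact (Continuous.mul (by fun_prop) hdc).continuousOn.integrableOn_compact hBc
        · exact (continuous_const.mul hdc.abs).continuousOn.integrableOn_compact hBc
        · have h1 : ‖x + h x‖ ^ 2 ≤ L ^ 2 := by
            have := hup x hx
            gcongr
          have h2 : ε ^ 2 ≤ ‖x + h x‖ ^ 2 := by
            have := hlow x hx
            gcongr
          refine (mul_le_mul_of_nonneg_left (le_abs_self _) (pow_nonneg (by linarith) _)).trans ?_
          exact mul_le_mul_of_nonneg_right
            (pow_le_pow_left₀ (by linarith) (by linarith) _) (abs_nonneg _)
      _ = (L ^ 2 - ε ^ 2) ^ N * C := by rw [integral_const_mul]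
  set p := L ^ 2 - ε ^ 2
  set q := L ^ 2 - (ε / 2) ^ 2
  have hq : 0 < q := ha0.trans_lt hab
  have hlim : Filter.Tendsto (fun N : ℕ => (p / q) ^ N * C) Filter.atTop (nhds (0 * C)) :=
    (tendsto_pow_atTop_nhds_zero_of_lt_one (by positivity) ((div_lt_one hq).2 hab)).mul_const C
  have hge : v ≤ 0 * C := by
    refine ge_of_tendsto hlim (Filter.Eventually.of_forall fun N => ?_)
    rw [div_pow, div_mul_eq_mul_div, le_div_iff₀ (by positivity)]
    exact key N
  linarith

lemma bw_cont {n : ℕ} (u : EuclideanSpace ℝ (Fin n) → EuclideanSpace ℝ (Fin n))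
    (hu : Continuous u) (r : ℝ) (hr : 0 < r) (hb : ∀ x, ‖u x‖ ≤ r) : ∃ x, x + u x = 0 := by
  have hfc : Continuous fun x => ‖x + u x‖ := by fun_prop
  obtain ⟨x0, -, hx0⟩ := (isCompact_closedBall (0 : EuclideanSpace ℝ (Fin n)) (r + 1)).exists_isMinOn
    ⟨0, by simp; linarith⟩ hfc.continuousOn
  refine ⟨x0, ?_⟩
  by_contra hne
  have hpos : 0 < min ‖x0 + u x0‖ 1 := lt_min (norm_pos_iff.2 hne) one_pos
  obtain ⟨g, hg, hgu, -⟩ := hu.exists_contDiff_approx 1 (ε := fun _ => min ‖x0 + u x0‖ 1)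
    continuous_const (fun _ => hpos)
  let χ : ContDiffBump (0 : EuclideanSpace ℝ (Fin n)) := ⟨r + 1, r + 2, by linarith, by linarith⟩
  obtain ⟨x, hx⟩ := bw_zero (fun x => χ x • g x) (χ.contDiff.smul hg)
    (χ.hasCompactSupport.smul_right)
  have hgx : ‖g x - u x‖ < min ‖x0 + u x0‖ 1 := by
    have := hgu x
    rwa [dist_eq_norm] at this
  have hgn : ‖g x‖ ≤ r + 1 := by
    have h1 := norm_add_le (g x - u x) (u x)
    rw [sub_add_cancel] at h1
    have := hb x
    have := hgx.trans_le (min_le_right _ _)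
    linarith
  have hxn : ‖x‖ ≤ r + 1 := by
    rw [eq_neg_of_add_eq_zero_left hx, norm_neg, norm_smul, Real.norm_of_nonneg χ.nonneg]
    exact (mul_le_of_le_one_left (norm_nonneg _) χ.le_one).trans hgn
  have hxm : x ∈ closedBall (0 : EuclideanSpace ℝ (Fin n)) (r + 1) := by simpa using hxn
  have hχ : χ x = 1 := χ.one_of_mem_closedBall hxm
  rw [hχ, one_smul] at hx
  have h2 : ‖x0 + u x0‖ ≤ ‖x + u x‖ := hx0 hxm
  have h3 : x + u x = -(g x - u x) := by
    rw [← sub_eq_zero, ← hx]; abel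
  rw [h3, norm_neg] at h2
  have := hgx.trans_le (min_le_left _ _)
  linarith

/-- If a continuous map `φ` on the closed ball of center `xhat` and radius `R` is
`ρ`-close to the identity (`0 < ρ < R`), then its image contains the closed ball
of center `xhat` and radius `R - ρ`. -/
theorem image_of_close_to_id {n : ℕ} (hn : 0 < n)
    (xhat : EuclideanSpace ℝ (Fin n)) (R ρ : ℝ) (hρ : 0 < ρ) (hρR : ρ < R)
    (φ : EuclideanSpace ℝ (Fin n) → EuclideanSpace ℝ (Fin n))
    (hcont : ContinuousOn φ (closedBall xhat R))
    (hclose : ∀ x ∈ closedBall xhat R, ‖φ x - x‖ ≤ ρ) :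
    closedBall xhat (R - ρ) ⊆ φ '' closedBall xhat R := by
  intro y hy
  have hR : 0 < R := hρ.trans hρR
  have hm : ∀ x : EuclideanSpace ℝ (Fin n), 0 < max R ‖x - xhat‖ := fun x =>
    hR.trans_le (le_max_left _ _)
  let p : EuclideanSpace ℝ (Fin n) → EuclideanSpace ℝ (Fin n) :=
    fun x => xhat + (R / max R ‖x - xhat‖) • (x - xhat)
  have hpc : Continuous p := by
    refine continuous_const.add (Continuous.smul (continuous_const.div (by fun_prop)
      fun x => (hm x).ne') (by fun_prop))
  have hpm : ∀ x, p x ∈ closedBall xhat R := fun x => by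
    rw [mem_closedBall, dist_eq_norm]
    simp only [p, add_sub_cancel_left]
    rw [norm_smul, Real.norm_of_nonneg (div_nonneg hR.le (hm x).le), div_mul_eq_mul_div,
      div_le_iff₀ (hm x)]
    exact mul_le_mul_of_nonneg_left (le_max_right _ _) hR.le
  have hpid : ∀ x ∈ closedBall xhat R, p x = x := fun x hx => by
    rw [mem_closedBall, dist_eq_norm] at hx
    simp only [p]
    rw [max_eq_left hx, div_self hR.ne']
    simp
  have hφp : Continuous fun x => φ (p x) := hcont.comp_continuous hpc hpm
  obtain ⟨x, hx⟩ := bw_cont (fun x => (φ (p x) - p x) - y)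
    ((hφp.sub hpc).sub continuous_const) (ρ + ‖y‖) (by positivity)
    (fun x => (norm_sub_le _ _).trans (add_le_add_left (hclose _ (hpm x)) _))
  have hxy : x - xhat = (y - xhat) - (φ (p x) - p x) := by
    rw [← sub_eq_zero]
    rw [← hx]; abel
  have hxm : x ∈ closedBall xhat R := by
    rw [mem_closedBall, dist_eq_norm] at hy ⊢
    rw [hxy]
    have := norm_sub_le (y - xhat) (φ (p x) - p x)
    have := hclose _ (hpm x)
    linarith
  refine ⟨x, hxm, ?_⟩
  rw [hpid x hxm] at hx
  have : x + (φ x - x - y) = φ x - y := by abel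
  exact sub_eq_zero.1 (this ▸ hx)
end

section
/- (Directional Open Mapping) Let n, m be positive integers, x̂ ∈ ℝᵐ, let C ⊆ ℝᵐ be a closed convex cone, and δ > 0. Let F : x̂ + (C ∩ B_m(δ)) → ℝⁿ be a continuous function that is differentiable at x̂ in the direction of C with differential L : ℝᵐ → ℝⁿ, and assume there exists v ∈ ℝⁿ with v ∈ int(L(C)). Then there exist a convex cone Γ ⊆ ℝⁿ and r̄ > 0 such that v ∈ int Γ and F(x̂ + (C ∩ B_m(δ))) ⊇ F(x̂) + (Γ ∩ B_n(r̄)). -/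
open Set Metric Filter Asymptotics Topology

/-- A convex cone in a real vector space: contains `0`, is convex, and is
invariant under multiplication by nonnegative scalars. -/
def IsConvexCone {E : Type*} [AddCommMonoid E] [Module ℝ E] (C : Set E) : Prop :=
  (0 : E) ∈ C ∧ Convex ℝ C ∧ ∀ r : ℝ, 0 ≤ r → ∀ c ∈ C, r • c ∈ C

theorem clm_det_interp {n : ℕ} (t : Fin (n+1) → ℝ) (ht : Function.Injective t)
    (A : EuclideanSpace ℝ (Fin n) →L[ℝ] EuclideanSpace ℝ (Fin n)) :
    (ContinuousLinearMap.id ℝ _ + A).det = ∑ j, Polynomial.eval 1 (Lagrange.basis Finset.univ t j) *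
      (ContinuousLinearMap.id ℝ _ + t j • A).det := by
  classical
  let b := (EuclideanSpace.basisFun (Fin n) ℝ).toBasis
  let M := LinearMap.toMatrix b b A.toLinearMap
  let P : Polynomial ℝ := Matrix.det
    ((Polynomial.X : Polynomial ℝ) • M.map Polynomial.C + (1 : Matrix (Fin n) (Fin n) ℝ).map Polynomial.C)
  have hP : ∀ s : ℝ, (ContinuousLinearMap.id ℝ _ + s • A).det = P.eval s := by
    intro s
    have h1 : (ContinuousLinearMap.id ℝ _ + s • A).det = Matrix.det (1 + s • M) := by
      rw [ContinuousLinearMap.det, ← LinearMap.det_toMatrix b]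
      simp [M]
    rw [h1, ← Polynomial.coe_evalRingHom, RingHom.map_det]
    congr 1
    ext i j
    by_cases hij : i = j <;>
    simp [hij, add_comm] <;> ring
  have hd : P.degree < (Finset.univ : Finset (Fin (n+1))).card := by
    have := Polynomial.natDegree_det_X_add_C_le M 1
    refine lt_of_le_of_lt (Polynomial.degree_le_natDegree) ?_
    simp only [Fintype.card_fin, Finset.card_univ] at this ⊢
    exact_mod_cast Nat.lt_succ_of_le this
  have h := Lagrange.eq_interpolate (s := Finset.univ) (v := t) ht.injOn hd
  have h2 := hP 1
  rw [one_smul] at h2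
  rw [h2, h, Lagrange.interpolate_apply, Polynomial.eval_finsetSum]
  refine Finset.sum_congr rfl fun j _ => ?_
  rw [hP, Polynomial.eval_mul, Polynomial.eval_C, mul_comm]

theorem lagrange_weights_sum {n : ℕ} (t : Fin (n+1) → ℝ) (ht : Function.Injective t) :
    ∑ j, Polynomial.eval 1 (Lagrange.basis Finset.univ t j) = 1 := by
  rw [← Polynomial.eval_finsetSum, Lagrange.sum_basis ht.injOn Finset.univ_nonempty, Polynomial.eval_one]

/-- extension by zero of a Lipschitz map on a closed ball vanishing on the sphere -/
theorem lipschitz_extend_zero {E : Type*} [NormedAddCommGroup E] [NormedSpace ℝ E] {R : ℝ} {K : NNReal} {h : E → E}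
    (hl : LipschitzOnWith K h (closedBall 0 R)) (h0 : ∀ x, R ≤ ‖x‖ → h x = 0) :
    LipschitzWith K h := by
  have key : ∀ x y, ‖x‖ ≤ R → R ≤ ‖y‖ → dist (h x) (h y) ≤ K * dist x y := by
    intro x y hx hy
    obtain ⟨s, hs, hs'⟩ : ∃ s ∈ Icc (0:ℝ) 1, ‖AffineMap.lineMap x y s‖ = R := by
      have hc : ContinuousOn (fun s : ℝ => ‖AffineMap.lineMap x y s‖) (Icc 0 1) := by
        apply Continuous.continuousOn
        exact (AffineMap.lineMap_continuous).norm
      have := intermediate_value_Icc (zero_le_one (α := ℝ)) hc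
      exact this ⟨by simpa using hx, by simpa using hy⟩
    have h1 := hl.dist_le_mul x (by simpa using hx) (AffineMap.lineMap x y s) (by simp [hs'])
    rw [h0 _ hs'.ge] at h1
    rw [h0 y hy]
    refine h1.trans ?_
    gcongr
    rw [dist_left_lineMap, Real.norm_of_nonneg hs.1]
    exact mul_le_of_le_one_left dist_nonneg hs.2
  refine LipschitzWith.of_dist_le_mul fun x y => ?_
  rcases le_total ‖x‖ R with hx | hx <;> rcases le_total ‖y‖ R with hy | hy
  · exact hl.dist_le_mul x (by simpa using hx) y (by simpa using hy)
  · exact key x y hx hy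
  · rw [dist_comm, dist_comm x]; exact key y x hy hx
  · rw [h0 x hx, h0 y hy, dist_self]; positivity

theorem integral_det_small {n : ℕ} {R : ℝ} {K : NNReal}
    {h : EuclideanSpace ℝ (Fin n) → EuclideanSpace ℝ (Fin n)}
    (hl : LipschitzWith K h) (h0 : ∀ x, R ≤ ‖x‖ → h x = 0)
    (hd : ∀ x ∈ ball (0 : EuclideanSpace ℝ (Fin n)) R, DifferentiableAt ℝ h x) :
    ∃ ε > 0, ∀ t : ℝ, 0 < t → t < ε →
      ∫ x in ball (0 : EuclideanSpace ℝ (Fin n)) R, (ContinuousLinearMap.id ℝ _ + t • fderiv ℝ h x).det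
        = (MeasureTheory.volume (ball (0 : EuclideanSpace ℝ (Fin n)) R)).toReal := by
  have hdet : ∀ᶠ A : EuclideanSpace ℝ (Fin n) →L[ℝ] EuclideanSpace ℝ (Fin n) in
      𝓝 0, 0 < (ContinuousLinearMap.id ℝ _ + A).det := by
    have hc : Continuous fun A : EuclideanSpace ℝ (Fin n) →L[ℝ] EuclideanSpace ℝ (Fin n) =>
      (ContinuousLinearMap.id ℝ _ + A).det := ContinuousLinearMap.continuous_det.comp (by fun_prop)
    apply hc.continuousAt.eventually_const_lt
    simp [ContinuousLinearMap.det]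
  obtain ⟨η, hη, hdet⟩ := Metric.eventually_nhds_iff.1 hdet
  have hK : (0:ℝ) < K + 1 := by positivity
  refine ⟨min (η / (K + 1)) (1 / (K+1)), by positivity, fun t ht htε => ?_⟩
  have ht1 : t * (K + 1) < η := by
    have := htε.trans_le (min_le_left _ _); rwa [lt_div_iff₀ hK] at this
  have ht2 : t * (K + 1) < 1 := by
    have := htε.trans_le (min_le_right _ _); rwa [lt_div_iff₀ hK] at this
  let g : EuclideanSpace ℝ (Fin n) → EuclideanSpace ℝ (Fin n) := fun x => x + t • h x
  have happ : ApproximatesLinearOn g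
      ((ContinuousLinearEquiv.refl ℝ (EuclideanSpace ℝ (Fin n)) :
        EuclideanSpace ℝ (Fin n) →L[ℝ] EuclideanSpace ℝ (Fin n))) univ (Real.toNNReal (t * K)) := by
    intro x _ y _
    have := hl.norm_sub_le x y
    have e : g x - g y - (x - y) = t • (h x - h y) := by
      simp only [g]; module
    simp only [ContinuousLinearEquiv.coe_coe, ContinuousLinearEquiv.refl_apply]
    rw [e, norm_smul, Real.norm_of_nonneg ht.le, Real.coe_toNNReal _ (by positivity), mul_assoc]
    gcongr
  have hc : Subsingleton (EuclideanSpace ℝ (Fin n)) ∨ Real.toNNReal (t * K) <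
      ‖((ContinuousLinearEquiv.refl ℝ (EuclideanSpace ℝ (Fin n))).symm :
        EuclideanSpace ℝ (Fin n) →L[ℝ] EuclideanSpace ℝ (Fin n))‖₊⁻¹ := by
    rcases subsingleton_or_nontrivial (EuclideanSpace ℝ (Fin n)) with hs | hs
    · exact Or.inl hs
    · right
      have : ‖((ContinuousLinearEquiv.refl ℝ (EuclideanSpace ℝ (Fin n))).symm :
        EuclideanSpace ℝ (Fin n) →L[ℝ] EuclideanSpace ℝ (Fin n))‖₊ = 1 := by
        ext; exact ContinuousLinearMap.norm_id
      rw [this, inv_one, Real.toNNReal_lt_one]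
      nlinarith
  have hinj : Function.Injective g := by
    have := happ.injOn hc
    exact injOn_univ.1 this
  have hsurj : Function.Surjective g := happ.surjective hc
  have hout : ∀ x, R ≤ ‖x‖ → g x = x := fun x hx => by simp [g, h0 x hx]
  have himg : g '' ball 0 R = ball 0 R := by
    ext y
    simp only [mem_image, mem_ball_zero_iff]
    constructor
    · rintro ⟨x, hx, rfl⟩
      by_contra! hcon
      have := hinj (hout _ hcon)
      rw [this] at hcon
      linarith
    · intro hy
      obtain ⟨x, rfl⟩ := hsurj y
      refine ⟨x, ?_, rfl⟩
      by_contra! hcon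
      rw [hout x hcon] at hy
      linarith
  have hcv := MeasureTheory.integral_image_eq_integral_abs_det_fderiv_smul MeasureTheory.volume
    (s := ball (0 : EuclideanSpace ℝ (Fin n)) R) (f := g)
    (f' := fun x => ContinuousLinearMap.id ℝ _ + t • fderiv ℝ h x) measurableSet_ball
    (fun x hx => ((hasFDerivAt_id x).add ((hd x hx).hasFDerivAt.const_smul t)).hasFDerivWithinAt)
    hinj.injOn (fun _ => (1:ℝ))
  rw [himg] at hcv
  simp only [MeasureTheory.integral_const, smul_eq_mul, mul_one] at hcv
  rw [MeasureTheory.measureReal_restrict_apply_univ] at hcv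
  rw [← MeasureTheory.measureReal_def, hcv]
  refine MeasureTheory.integral_congr_ae (Filter.Eventually.of_forall fun x => ?_)
  refine (abs_of_pos (hdet ?_)).symm
  rw [dist_zero_right, norm_smul, Real.norm_of_nonneg ht.le]
  have := norm_fderiv_le_of_lipschitz ℝ hl (x₀ := x)
  nlinarith

theorem integral_det_one {n : ℕ} {R : ℝ} {K : NNReal}
    {h : EuclideanSpace ℝ (Fin n) → EuclideanSpace ℝ (Fin n)}
    (hl : LipschitzWith K h) (h0 : ∀ x, R ≤ ‖x‖ → h x = 0)
    (hd : ∀ x ∈ ball (0 : EuclideanSpace ℝ (Fin n)) R, DifferentiableAt ℝ h x) :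
      ∫ x in ball (0 : EuclideanSpace ℝ (Fin n)) R, (ContinuousLinearMap.id ℝ _ + fderiv ℝ h x).det
        = (MeasureTheory.volume (ball (0 : EuclideanSpace ℝ (Fin n)) R)).toReal := by
  obtain ⟨ε, hε, H⟩ := integral_det_small hl h0 hd
  let t : Fin (n+1) → ℝ := fun j => ε / (j + 2)
  have ht : Function.Injective t := by
    intro i j hij
    simp only [t] at hij
    have hi : (0:ℝ) < (i:ℕ) + 2 := by positivity
    have hj : (0:ℝ) < (j:ℕ) + 2 := by positivity
    rw [div_eq_div_iff hi.ne' hj.ne'] at hij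
    have hij := mul_left_cancel₀ hε.ne' hij
    have : ((i:ℕ):ℝ) = (j:ℕ) := by linarith
    exact Fin.ext (by exact_mod_cast this)
  have htp : ∀ j, 0 < t j := fun j => by positivity
  have htl : ∀ j, t j < ε := fun j => div_lt_self hε (by
    have : (0:ℝ) ≤ (j:ℕ) := by positivity
    linarith)
  have hint : ∀ s : ℝ, MeasureTheory.IntegrableOn
      (fun x => (ContinuousLinearMap.id ℝ _ + s • fderiv ℝ h x).det) (ball 0 R) := by
    intro s
    have hc : Continuous fun A : EuclideanSpace ℝ (Fin n) →L[ℝ] EuclideanSpace ℝ (Fin n) =>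
      (ContinuousLinearMap.id ℝ _ + s • A).det := ContinuousLinearMap.continuous_det.comp (by fun_prop)
    obtain ⟨B, hB⟩ := (isCompact_closedBall (0 : EuclideanSpace ℝ (Fin n) →L[ℝ] EuclideanSpace ℝ (Fin n))
      K).exists_bound_of_continuousOn hc.continuousOn
    refine MeasureTheory.IntegrableOn.of_bound (MeasureTheory.measure_ball_lt_top) ?_ B ?_
    · exact (hc.measurable.comp (measurable_fderiv ℝ h)).aestronglyMeasurable
    · refine Filter.Eventually.of_forall fun x => hB _ ?_
      simpa using norm_fderiv_le_of_lipschitz ℝ hl (x₀ := x)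
  rw [MeasureTheory.integral_congr_ae (Filter.Eventually.of_forall fun x => clm_det_interp t ht (fderiv ℝ h x))]
  rw [MeasureTheory.integral_finsetSum _ (fun j _ => (hint (t j)).const_mul _)]
  simp_rw [MeasureTheory.integral_const_mul]
  rw [Finset.sum_congr rfl (fun j _ => by rw [H (t j) (htp j) (htl j)]), ← Finset.sum_mul,
    lagrange_weights_sum t ht, one_mul]

theorem smooth_fixed_point {n : ℕ} {R : ℝ} (hR : 0 < R)
    {φ : EuclideanSpace ℝ (Fin n) → EuclideanSpace ℝ (Fin n)} (hφ : ContDiff ℝ 1 φ)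
    (h0 : ∀ x, R ≤ ‖x‖ → φ x = 0) : ∃ x, φ x = x := by
  classical
  by_contra! hcon
  let g : EuclideanSpace ℝ (Fin n) → EuclideanSpace ℝ (Fin n) := fun x => x - φ x
  have hg : ContDiff ℝ 1 g := contDiff_id.sub hφ
  have hg0 : ∀ x, g x ≠ 0 := fun x hx => hcon x (sub_eq_zero.1 hx).symm
  let r : EuclideanSpace ℝ (Fin n) → EuclideanSpace ℝ (Fin n) := fun x => (R / ‖g x‖) • g x
  have hr : ContDiff ℝ 1 r :=
    (contDiff_const.div (hg.norm ℝ hg0) (fun x => norm_ne_zero_iff.2 (hg0 x))).smul hg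
  have hrn : ∀ x, ‖r x‖ = R := fun x => by
    have := norm_pos_iff.2 (hg0 x)
    simp only [r, norm_smul, norm_div, norm_norm, Real.norm_of_nonneg hR.le]
    field_simp
  have hrs : ∀ x, ‖x‖ = R → r x = x := fun x hx => by
    simp [r, g, h0 x hx.ge, hx, hR.ne']
  have hrd : ∀ x, DifferentiableAt ℝ r x := fun x => hr.differentiable one_ne_zero x
  have hrdet : ∀ x, (fderiv ℝ r x).det = 0 := by
    intro x
    by_contra hne
    have hsurj : Function.Surjective (fderiv ℝ r x) := by
      have hu : IsUnit (LinearMap.det (fderiv ℝ r x).toLinearMap) := isUnit_iff_ne_zero.2 hne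
      intro y
      obtain ⟨w, hw⟩ := (LinearMap.equivOfIsUnitDet hu).surjective y
      exact ⟨w, by simpa using hw⟩
    obtain ⟨w, hw⟩ := hsurj (r x)
    have hd := (hrd x).hasFDerivAt.norm_sq
    have hc : HasFDerivAt (fun y => ‖r y‖ ^ 2) (0 : EuclideanSpace ℝ (Fin n) →L[ℝ] ℝ) x := by
      simp_rw [hrn]; exact hasFDerivAt_const _ _
    have := DFunLike.congr_fun (hd.unique hc) w
    simp [hw, hrn, hR.ne'] at this
  let h : EuclideanSpace ℝ (Fin n) → EuclideanSpace ℝ (Fin n) := fun x => if ‖x‖ < R then r x - x else 0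
  have hh0 : ∀ x, R ≤ ‖x‖ → h x = 0 := fun x hx => by simp [h, not_lt.2 hx]
  have hk : ContDiff ℝ 1 (fun x => r x - x) := hr.sub contDiff_id
  obtain ⟨K, hK⟩ := hk.contDiffOn.exists_lipschitzOnWith (s := closedBall 0 R) one_ne_zero
    (convex_closedBall _ _) (isCompact_closedBall _ _)
  have hl : LipschitzOnWith K h (closedBall 0 R) := by
    have : EqOn h (fun x => r x - x) (closedBall 0 R) := by
      intro x hx
      rw [mem_closedBall_zero_iff] at hx
      rcases hx.lt_or_eq with hx | hx
      · simp [h, hx]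
      · simp [h, hx, hrs]
    intro x hx y hy
    rw [this hx, this hy]
    exact hK hx hy
  have hl := lipschitz_extend_zero hl hh0
  have hfd : ∀ x ∈ ball (0 : EuclideanSpace ℝ (Fin n)) R,
      HasFDerivAt h (fderiv ℝ r x - ContinuousLinearMap.id ℝ _) x := by
    intro x hx
    refine ((hrd x).hasFDerivAt.sub (hasFDerivAt_id x)).congr_of_eventuallyEq ?_
    filter_upwards [isOpen_ball.mem_nhds hx] with y hy
    rw [mem_ball_zero_iff] at hy
    simp [h, hy]
  have hI := integral_det_one hl hh0 (fun x hx => (hfd x hx).differentiableAt)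
  rw [MeasureTheory.setIntegral_congr_fun (g := fun _ => (0:ℝ)) measurableSet_ball (fun x hx => by
    simp only [(hfd x hx).fderiv]
    rw [add_sub_cancel, hrdet])] at hI
  rw [MeasureTheory.integral_zero] at hI
  exact (ENNReal.toReal_pos (measure_ball_pos _ _ hR).ne' MeasureTheory.measure_ball_lt_top.ne).ne hI

theorem brouwer_ball {n : ℕ} {ρ : ℝ} (hρ : 0 < ρ)
    {f : EuclideanSpace ℝ (Fin n) → EuclideanSpace ℝ (Fin n)}
    (hf : ContinuousOn f (closedBall 0 ρ)) (hm : MapsTo f (closedBall 0 ρ) (closedBall 0 ρ)) :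
    ∃ x ∈ closedBall (0 : EuclideanSpace ℝ (Fin n)) ρ, f x = x := by
  let p : EuclideanSpace ℝ (Fin n) → EuclideanSpace ℝ (Fin n) := fun x => (ρ / max ρ ‖x‖) • x
  have hmax : ∀ x : EuclideanSpace ℝ (Fin n), 0 < max ρ ‖x‖ := fun x => lt_max_of_lt_left hρ
  have hp : Continuous p := (continuous_const.div (continuous_const.max continuous_norm)
    (fun x => (hmax x).ne')).smul continuous_id
  have hpm : ∀ x, p x ∈ closedBall 0 ρ := fun x => by
    rw [mem_closedBall_zero_iff, norm_smul, Real.norm_of_nonneg (by have := hmax x; positivity),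
      div_mul_eq_mul_div, div_le_iff₀ (hmax x)]
    gcongr
    exact le_max_right _ _
  have hpid : ∀ x, ‖x‖ ≤ ρ → p x = x := fun x hx => by simp [p, max_eq_left hx, hρ.ne']
  let χ : EuclideanSpace ℝ (Fin n) → ℝ := fun x => max 0 (min 1 (2 - ‖x‖ / ρ))
  have hχ : Continuous χ := by fun_prop
  let φ : EuclideanSpace ℝ (Fin n) → EuclideanSpace ℝ (Fin n) := fun x => χ x • f (p x)
  have hφ : Continuous φ := hχ.smul (hf.comp_continuous hp hpm)
  have hφ0 : ∀ x, 2 * ρ ≤ ‖x‖ → φ x = 0 := fun x hx => by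
    have : 2 - ‖x‖ / ρ ≤ 0 := by rw [sub_nonpos, le_div_iff₀ hρ]; exact hx
    have : χ x = 0 := max_eq_left ((min_le_right _ _).trans this)
    simp [φ, this]
  obtain ⟨x, hx⟩ : ∃ x, φ x = x := by
    by_contra! hcon
    obtain ⟨ψ, hψ, hd, hs⟩ := hφ.exists_contDiff_approx 1 (ε := fun x => dist (φ x) x)
      (hφ.dist continuous_id) (fun x => dist_pos.2 (hcon x))
    obtain ⟨x, hx⟩ := smooth_fixed_point (R := 2 * ρ) (by positivity) hψ (fun x hx => by
      by_contra hne
      exact hs hne (hφ0 x hx))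
    have := hd x
    rw [hx, dist_comm] at this
    exact lt_irrefl _ this
  have hχ1 : χ x ≤ 1 := max_le zero_le_one (min_le_left _ _)
  have hχ0 : 0 ≤ χ x := le_max_left _ _
  have hfp := hm (hpm x)
  rw [mem_closedBall_zero_iff] at hfp
  have hxρ : ‖x‖ ≤ ρ := by
    rw [← hx, norm_smul, Real.norm_of_nonneg hχ0]
    exact (mul_le_of_le_one_left (norm_nonneg _) hχ1).trans hfp
  have hχx : χ x = 1 := by
    have : ‖x‖ / ρ ≤ 1 := by rwa [div_le_one hρ]
    have : min 1 (2 - ‖x‖ / ρ) = 1 := min_eq_left (by linarith)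
    simp [χ, this]
  refine ⟨x, by simpa using hxρ, ?_⟩
  simpa [φ, hχx, hpid x hxρ] using hx

theorem IsConvexCone.add_mem' {E : Type*} [AddCommGroup E] [Module ℝ E] {C : Set E}
    (hC : IsConvexCone C) {x y : E} (hx : x ∈ C) (hy : y ∈ C) : x + y ∈ C := by
  have h := hC.2.1 (hC.2.2 2 (by norm_num) x hx) (hC.2.2 2 (by norm_num) y hy)
    (by norm_num : (0:ℝ) ≤ 1/2) (by norm_num : (0:ℝ) ≤ 1/2) (by norm_num)
  simpa [smul_smul] using h

theorem IsConvexCone.sum_mem' {E ι : Type*} [AddCommGroup E] [Module ℝ E] {C : Set E}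
    (hC : IsConvexCone C) (s : Finset ι) {f : ι → E} (hf : ∀ i ∈ s, f i ∈ C) :
    ∑ i ∈ s, f i ∈ C :=
  Finset.sum_induction f (· ∈ C) (fun _ _ => hC.add_mem') hC.1 hf

/-- A continuous local right inverse of `L` near `v`, with values in `C`. -/
theorem exists_section {n m : ℕ} (hn : 0 < n) {C : Set (EuclideanSpace ℝ (Fin m))}
    (hC : IsConvexCone C) (L : EuclideanSpace ℝ (Fin m) →L[ℝ] EuclideanSpace ℝ (Fin n))
    {v : EuclideanSpace ℝ (Fin n)} (hv : v ∈ interior (⇑L '' C)) :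
    ∃ ρ > 0, ∃ σ : EuclideanSpace ℝ (Fin n) → EuclideanSpace ℝ (Fin m), Continuous σ ∧
      ∀ u, ‖u‖ ≤ ρ → σ u ∈ C ∧ L (σ u) = v + u := by
  obtain ⟨η, hη, hb⟩ := Metric.nhds_basis_closedBall.mem_iff.1 (mem_interior_iff_mem_nhds.1 hv)
  let e : Fin n → EuclideanSpace ℝ (Fin n) := fun i => EuclideanSpace.single i 1
  have hp : ∀ i, ∃ a ∈ C, L a = v + η • e i := fun i => hb (by
    simp [e, norm_smul, abs_of_pos hη])
  have hq : ∀ i, ∃ a ∈ C, L a = v - η • e i := fun i => hb (by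
    simp [e, norm_smul, abs_of_pos hη])
  choose a haC ha using hp
  choose b hbC hb using hq
  have hn' : (0:ℝ) < n := by exact_mod_cast hn
  refine ⟨η / n, by positivity, fun u => ∑ i, ((1 / (2 * n) + u i / (2 * η)) • a i +
    (1 / (2 * n) - u i / (2 * η)) • b i), by fun_prop, fun u hu => ⟨?_, ?_⟩⟩
  · refine hC.sum_mem' _ fun i _ => ?_
    have h1 : |u i| ≤ η / n := (PiLp.norm_apply_le u i).trans hu
    have h2 : |u i / (2 * η)| ≤ 1 / (2 * n) := by
      rw [abs_div, abs_of_pos (by positivity : 0 < 2 * η), div_le_iff₀ (by positivity)]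
      refine h1.trans_eq ?_
      field_simp
    rw [abs_le] at h2
    exact hC.add_mem' (hC.2.2 _ (by linarith) _ (haC i)) (hC.2.2 _ (by linarith) _ (hbC i))
  · rw [map_sum]
    have h1 : ∀ i, L ((1 / (2 * n) + u i / (2 * η)) • a i +
        (1 / (2 * n) - u i / (2 * η)) • b i) = (1 / n : ℝ) • v + u i • e i := by
      intro i
      rw [map_add, map_smul, map_smul, ha, hb]
      match_scalars <;> field_simp <;> ring
    simp_rw [h1]
    rw [Finset.sum_add_distrib, Finset.sum_const, Finset.card_univ, Fintype.card_fin]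
    congr 1
    · rw [← Nat.cast_smul_eq_nsmul ℝ, smul_smul, mul_one_div_cancel hn'.ne', one_smul]
    · ext j
      simp [e, Pi.single_apply]

/-- Directional Open Mapping theorem: if `F` is continuous on `xhat + (C ∩ B_m(δ))`,
differentiable at `xhat` in the direction of the closed convex cone `C` with
differential `L`, and `v ∈ int (L C)`, then there are a convex cone `Γ ∋ v` in its
interior and `r > 0` with `F xhat + (Γ ∩ B_n(r)) ⊆ F (xhat + (C ∩ B_m(δ)))`. -/
theorem directional_open_mapping {n m : ℕ} (hn : 0 < n) (hm : 0 < m)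
    (xhat : EuclideanSpace ℝ (Fin m)) (C : Set (EuclideanSpace ℝ (Fin m)))
    (hC : IsConvexCone C) (hCclosed : IsClosed C) (δ : ℝ) (hδ : 0 < δ)
    (F : EuclideanSpace ℝ (Fin m) → EuclideanSpace ℝ (Fin n))
    (L : EuclideanSpace ℝ (Fin m) →L[ℝ] EuclideanSpace ℝ (Fin n))
    (hcont : ContinuousOn F ((fun c => xhat + c) '' (C ∩ closedBall 0 δ)))
    (hdiff : (fun c => F (xhat + c) - F xhat - L c)
      =o[𝓝[C ∩ closedBall 0 δ] 0] (fun c => c))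
    (v : EuclideanSpace ℝ (Fin n)) (hv : v ∈ interior (⇑L '' C)) :
    ∃ Γ : Set (EuclideanSpace ℝ (Fin n)), IsConvexCone Γ ∧ v ∈ interior Γ ∧
      ∃ r : ℝ, 0 < r ∧
        (fun z => F xhat + z) '' (Γ ∩ closedBall 0 r) ⊆
          F '' ((fun c => xhat + c) '' (C ∩ closedBall 0 δ)) := by
  obtain ⟨ρ, hρ, σ, hσ, hσC⟩ := exists_section hn hC L hv
  obtain ⟨M, hM⟩ := (isCompact_closedBall (0 : EuclideanSpace ℝ (Fin n))
      ρ).exists_bound_of_continuousOn hσ.continuousOn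
  have hM0 : 0 ≤ M := (norm_nonneg _).trans (hM 0 (by simp [hρ.le]))
  have hM1 : 0 < M + 1 := by linarith
  have hlo := hdiff.def (c := ρ / (2 * (M + 1))) (by positivity)
  rw [eventually_nhdsWithin_iff, Metric.eventually_nhds_iff] at hlo
  obtain ⟨δ₁, hδ₁, hlo⟩ := hlo
  let lam0 : ℝ := min δ δ₁ / (2 * (M + 1))
  have hlam0 : 0 < lam0 := by have := lt_min hδ hδ₁; positivity
  have core : ∀ (y : EuclideanSpace ℝ (Fin n)) (l : ℝ), 0 < l → l ≤ lam0 →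
      ‖y - l • v‖ ≤ l * (ρ / 2) →
      F xhat + y ∈ F '' ((fun c => xhat + c) '' (C ∩ closedBall 0 δ)) := by
    intro y l hl hll hy
    have hl2 : l * (2 * (M + 1)) ≤ min δ δ₁ := by
      rwa [← le_div_iff₀ (by positivity)]
    have hmin : 0 < min δ δ₁ := lt_min hδ hδ₁
    have hnorm : ∀ u ∈ closedBall (0 : EuclideanSpace ℝ (Fin n)) ρ, ‖l • σ u‖ ≤ l * M := by
      intro u hu
      rw [norm_smul, Real.norm_of_nonneg hl.le]
      gcongr
      exact hM u hu
    have hlt : l * M < min δ δ₁ := by nlinarith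
    have hmem : ∀ u ∈ closedBall (0 : EuclideanSpace ℝ (Fin n)) ρ,
        l • σ u ∈ C ∩ closedBall 0 δ := by
      intro u hu
      refine ⟨hC.2.2 l hl.le _ (hσC u (by simpa using hu)).1, ?_⟩
      rw [mem_closedBall_zero_iff]
      exact ((hnorm u hu).trans hlt.le).trans (min_le_left _ _)
    let f : EuclideanSpace ℝ (Fin n) → EuclideanSpace ℝ (Fin n) := fun u =>
      l⁻¹ • ((y - l • v) - (F (xhat + l • σ u) - F xhat - L (l • σ u)))
    have hf : ContinuousOn f (closedBall 0 ρ) := by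
      have h1 : ContinuousOn (fun u => F (xhat + l • σ u)) (closedBall 0 ρ) :=
        hcont.comp (by fun_prop) (fun u hu => ⟨_, hmem u hu, rfl⟩)
      have h2 : ContinuousOn (fun u => L (l • σ u)) (closedBall 0 ρ) := by fun_prop
      exact (continuousOn_const.sub ((h1.sub continuousOn_const).sub h2)).const_smul l⁻¹
    have hmaps : MapsTo f (closedBall 0 ρ) (closedBall 0 ρ) := by
      intro u hu
      have h1 := hlo (y := l • σ u) (by
        rw [dist_zero_right]
        exact ((hnorm u hu).trans_lt hlt).trans_le (min_le_right _ _)) (hmem u hu)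
      have h2 : ‖F (xhat + l • σ u) - F xhat - L (l • σ u)‖ ≤ l * (ρ / 2) := by
        refine h1.trans ?_
        calc ρ / (2 * (M + 1)) * ‖l • σ u‖ ≤ ρ / (2 * (M + 1)) * (l * (M + 1)) := by
              gcongr
              exact (hnorm u hu).trans (by nlinarith)
          _ = l * (ρ / 2) := by field_simp
      rw [mem_closedBall_zero_iff, norm_smul, norm_inv, Real.norm_of_nonneg hl.le,
        inv_mul_le_iff₀ hl]
      refine (norm_sub_le _ _).trans ?_
      linarith
    obtain ⟨u, hu, hfu⟩ := brouwer_ball hρ hf hmaps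
    refine ⟨_, ⟨_, hmem u hu, rfl⟩, ?_⟩
    have h3 : (y - l • v) - (F (xhat + l • σ u) - F xhat - L (l • σ u)) = l • u := by
      rw [← hfu, smul_inv_smul₀ hl.ne', hfu]
    rw [map_smul, (hσC u (by simpa using hu)).2, smul_add] at h3
    show F (xhat + l • σ u) = F xhat + y
    rw [← sub_eq_zero] at h3 ⊢
    rw [← neg_eq_zero, ← h3]
    abel
  rcases eq_or_ne v 0 with rfl | hv0
  · refine ⟨univ, ⟨mem_univ _, convex_univ, fun _ _ _ _ => mem_univ _⟩, by simp,
      lam0 * (ρ / 2), by positivity, ?_⟩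
    rintro _ ⟨y, ⟨-, hy⟩, rfl⟩
    exact core y lam0 hlam0 le_rfl (by simpa using hy)
  · have hvn := norm_pos_iff.2 hv0
    let κ : ℝ := min (ρ / 2) (‖v‖ / 2)
    have hκ : 0 < κ := by positivity
    refine ⟨{y | ∃ l : ℝ, 0 ≤ l ∧ ‖y - l • v‖ ≤ l * κ}, ⟨⟨0, by simp⟩, ?_, ?_⟩, ?_,
      lam0 * (‖v‖ / 2), by positivity, ?_⟩
    · rintro y ⟨l, hl, hy⟩ z ⟨k, hk, hz⟩ s t hs ht -
      refine ⟨s * l + t * k, by positivity, ?_⟩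
      have : s • y + t • z - (s * l + t * k) • v = s • (y - l • v) + t • (z - k • v) := by module
      rw [this]
      refine (norm_add_le _ _).trans ?_
      rw [norm_smul, norm_smul, Real.norm_of_nonneg hs, Real.norm_of_nonneg ht]
      nlinarith
    · rintro s hs y ⟨l, hl, hy⟩
      refine ⟨s * l, by positivity, ?_⟩
      rw [mul_smul, ← smul_sub, norm_smul, Real.norm_of_nonneg hs, mul_assoc]
      gcongr
    · rw [mem_interior_iff_mem_nhds]
      filter_upwards [closedBall_mem_nhds v hκ] with y hy
      refine ⟨1, zero_le_one, ?_⟩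
      simpa [dist_eq_norm] using hy
    · rintro _ ⟨y, ⟨⟨l, hl, hy⟩, hyr⟩, rfl⟩
      rw [mem_closedBall_zero_iff] at hyr
      rcases hl.eq_or_lt with rfl | hl
      · have hy0 : y = 0 := by simpa using hy
        refine ⟨xhat, ⟨0, ⟨hC.1, by simp [hδ.le]⟩, by simp⟩, by simp [hy0]⟩
      · refine core y l hl ?_ (hy.trans (by gcongr; exact min_le_left _ _))
        have h1 : ‖l • v‖ ≤ ‖y‖ + ‖y - l • v‖ := by
          have := norm_sub_le y (y - l • v)
          simpa using this
        rw [norm_smul, Real.norm_of_nonneg hl.le] at h1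
        have h2 : l * κ ≤ l * (‖v‖ / 2) := by gcongr; exact min_le_right _ _
        have h3 : l * (‖v‖ / 2) ≤ lam0 * (‖v‖ / 2) := by linarith
        exact le_of_mul_le_mul_right h3 (by positivity)
end

section
/- Let A₁ and A₂ be subsets of ℝⁿ, let x ∈ A₁ ∩ A₂, and let K₁ and K₂ be Boltyanski approximating cones to A₁ and A₂ at x, respectively. If K₁ and K₂ are strongly transversal, then the sets A₁ and A₂ are not locally separated at x. -/
open Set Metric Filter Asymptotics Topology

/-- `K` is a Boltyanski approximating cone to `A` at `y`: there are `m : ℕ`, a convex cone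
`C ⊆ ℝᵐ`, a linear map `L : ℝᵐ → E` with `K = L(C)`, a `δ > 0` and a continuous map
`F : C ∩ B_m(δ) → A` with `F 0 = y` and `F c = y + L c + o(c)`. -/
def IsBoltyanskiCone {E : Type*} [NormedAddCommGroup E] [NormedSpace ℝ E]
    (A : Set E) (y : E) (K : Set E) : Prop :=
  ∃ (m : ℕ) (C : Set (EuclideanSpace ℝ (Fin m)))
    (L : EuclideanSpace ℝ (Fin m) →ₗ[ℝ] E) (δ : ℝ)
    (F : EuclideanSpace ℝ (Fin m) → E),
    IsConvexCone C ∧ K = ⇑L '' C ∧ 0 < δ ∧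
    ContinuousOn F (C ∩ closedBall 0 δ) ∧
    (∀ c ∈ C ∩ closedBall 0 δ, F c ∈ A) ∧ F 0 = y ∧
    (fun c => F c - y - L c) =o[𝓝[C ∩ closedBall 0 δ] 0] (fun c => c)


/-- Two cones are transversal if `K₁ - K₂ = X`. -/
def Transversal {X : Type*} [AddCommGroup X] [Module ℝ X] (K₁ K₂ : Set X) : Prop :=
  {x | ∃ k₁ ∈ K₁, ∃ k₂ ∈ K₂, x = k₁ - k₂} = Set.univ

/-- Two cones are strongly transversal if they are transversal and `K₁ ∩ K₂ ≠ {0}`. -/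
def StronglyTransversal {X : Type*} [AddCommGroup X] [Module ℝ X] (K₁ K₂ : Set X) : Prop :=
  Transversal K₁ K₂ ∧ K₁ ∩ K₂ ≠ {0}

/-- `A₁` and `A₂` are locally separated at `y` if some neighborhood `N` of `y`
satisfies `A₁ ∩ A₂ ∩ N = {y}`. -/
def LocallySeparated {X : Type*} [TopologicalSpace X] (A₁ A₂ : Set X) (y : X) : Prop :=
  ∃ N ∈ nhds y, A₁ ∩ A₂ ∩ N = {y}


lemma det_interp {E : Type*} [NormedAddCommGroup E] [NormedSpace ℝ E] [FiniteDimensional ℝ E]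
    (t : ℕ → ℝ) (ht : Function.Injective t) :
    ∃ w : ℕ → ℝ, ∑ i ∈ Finset.range (Module.finrank ℝ E + 1), w i = 1 ∧
      ∀ M : E →L[ℝ] E, (ContinuousLinearMap.id ℝ E + M).det =
        ∑ i ∈ Finset.range (Module.finrank ℝ E + 1),
          w i * (ContinuousLinearMap.id ℝ E + t i • M).det := by
  classical
  set s := Finset.range (Module.finrank ℝ E + 1) with hs
  have hinj : Set.InjOn t s := ht.injOn
  refine ⟨fun i => (Lagrange.basis s t i).eval 1, ?_, ?_⟩
  · rw [← Polynomial.eval_finsetSum, Lagrange.sum_basis hinj (by simp [hs])]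
    simp
  · intro M
    let b := Module.finBasis ℝ E
    let A := LinearMap.toMatrix b b (M : E →ₗ[ℝ] E)
    let p : Polynomial ℝ :=
      Matrix.det ((Polynomial.X : Polynomial ℝ) • A.map Polynomial.C +
        (1 : Matrix _ _ ℝ).map Polynomial.C)
    have hp : ∀ r : ℝ, p.eval r = (ContinuousLinearMap.id ℝ E + r • M).det := by
      intro r
      have h1 : (ContinuousLinearMap.id ℝ E + r • M).det
          = LinearMap.det (LinearMap.id + r • (M : E →ₗ[ℝ] E)) := rfl
      rw [h1, ← LinearMap.det_toMatrix b]
      simp only [p]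
      rw [← Polynomial.coe_evalRingHom, RingHom.map_det]
      congr 1
      ext i j
      simp [A, Matrix.one_apply]
      split_ifs <;> simp <;> ring
    have hdeg : p.degree < s.card := by
      have := Polynomial.natDegree_det_X_add_C_le A 1
      refine lt_of_le_of_lt Polynomial.degree_le_natDegree ?_
      rw [hs, Finset.card_range]
      have h2 : p.natDegree ≤ Module.finrank ℝ E := by rwa [Fintype.card_fin] at this
      exact_mod_cast Nat.lt_succ_of_le h2
    have h1 := hp 1
    rw [one_smul] at h1
    rw [← h1]
    have h3 := congrArg (Polynomial.eval 1) (Lagrange.eq_interpolate hinj hdeg)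
    rw [h3, Lagrange.interpolate_apply, Polynomial.eval_finsetSum]
    refine Finset.sum_congr rfl fun i _ => ?_
    simp [hp, mul_comm]

/-- Extension by zero off the ball is globally Lipschitz. -/
lemma lipschitz_ext {E : Type*} [NormedAddCommGroup E] [NormedSpace ℝ E]
    (g : E → E) (R : ℝ) (K : NNReal) (hg : LipschitzOnWith K g (closedBall 0 R))
    (h0 : ∀ x, ‖x‖ = R → g x = 0) :
    LipschitzWith K (fun x => if ‖x‖ ≤ R then g x else 0) := by
  have key : ∀ x y : E, ‖x‖ ≤ R → R < ‖y‖ → ‖g x‖ ≤ K * ‖x - y‖ := by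
    intro x y hx hy
    have hc : ContinuousOn (fun t : ℝ => ‖x + t • (y - x)‖) (Icc 0 1) := by fun_prop
    obtain ⟨t, ht, hz⟩ := intermediate_value_Icc zero_le_one hc
      (show R ∈ Icc _ _ from ⟨by simpa using hx, by simpa using hy.le⟩)
    simp only at hz
    have h1 := hg.norm_sub_le (x := x) (y := x + t • (y - x)) (by simpa using hx)
      (by simpa using hz.le)
    rw [h0 _ hz, sub_zero] at h1
    refine h1.trans ?_
    gcongr
    have : x - (x + t • (y - x)) = t • (x - y) := by module
    rw [this, norm_smul, Real.norm_of_nonneg ht.1]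
    exact mul_le_of_le_one_left (norm_nonneg _) ht.2
  refine LipschitzWith.of_dist_le_mul fun x y => ?_
  rw [dist_eq_norm, dist_eq_norm]
  by_cases hx : ‖x‖ ≤ R <;> by_cases hy : ‖y‖ ≤ R <;> simp only [hx, hy, if_true, if_false]
  · exact hg.norm_sub_le (by simpa using hx) (by simpa using hy)
  · rw [sub_zero]; exact key x y hx (not_le.1 hy)
  · rw [zero_sub, norm_neg, norm_sub_rev]; exact key y x hy (not_le.1 hx)
  · simp; positivity

lemma image_ball {E : Type*} [NormedAddCommGroup E] [NormedSpace ℝ E] [CompleteSpace E]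
    (g : E → E) (R : ℝ) (K : NNReal) (hg : LipschitzOnWith K g (closedBall 0 R))
    (h0 : ∀ x, ‖x‖ = R → g x = 0) (hR : ∀ x, ‖x‖ ≤ R → ‖x + g x‖ ≤ R) (hK : K < 1) :
    InjOn (fun x => x + g x) (closedBall 0 R) ∧
      (fun x => x + g x) '' closedBall 0 R = closedBall 0 R := by
  constructor
  · intro x hx y hy hxy
    simp only at hxy
    have h1 := hg.norm_sub_le hx hy
    have : g x - g y = y - x := by
      rw [sub_eq_sub_iff_add_eq_add, add_comm, hxy, add_comm]
    rw [this, norm_sub_rev] at h1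
    have hK' : (K : ℝ) < 1 := hK
    have : ‖x - y‖ = 0 := by nlinarith [norm_nonneg (x - y)]
    exact sub_eq_zero.1 (norm_eq_zero.1 this)
  · apply Subset.antisymm
    · rintro _ ⟨x, hx, rfl⟩
      simpa using hR x (by simpa using hx)
    · intro z hz
      have hL := lipschitz_ext g R K hg h0
      have hc : ContractingWith K (fun x => z - (if ‖x‖ ≤ R then g x else 0)) := by
        refine ⟨hK, LipschitzWith.of_dist_le_mul fun x y => ?_⟩
        rw [dist_sub_left]
        exact hL.dist_le_mul x y
      have hfix := hc.fixedPoint_isFixedPt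
      set x := ContractingWith.fixedPoint _ hc
      have hfix' : z - (if ‖x‖ ≤ R then g x else 0) = x := hfix
      by_cases hx : ‖x‖ ≤ R
      · rw [if_pos hx] at hfix'
        exact ⟨x, by simpa using hx, (eq_sub_iff_add_eq.1 hfix'.symm)⟩
      · rw [if_neg hx, sub_zero] at hfix'
        exact absurd (by simpa [hfix'] using hz) hx

lemma no_retraction {E : Type*} [NormedAddCommGroup E] [InnerProductSpace ℝ E]
    [FiniteDimensional ℝ E] [MeasurableSpace E] [BorelSpace E] (f : E → E)
    (hf : ContDiff ℝ 1 f) (R : ℝ) (hR : 0 < R) (hn : ∀ x, ‖f x‖ = R)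
    (hb : ∀ x, ‖x‖ = R → f x = x) : False := by
  let g : E → E := fun x => f x - x
  have hgC : ContDiff ℝ 1 g := hf.sub contDiff_id
  obtain ⟨K, hK⟩ := hgC.contDiffOn.exists_lipschitzOnWith one_ne_zero
    (convex_closedBall (0 : E) R) (isCompact_closedBall 0 R)
  have hDc : Continuous (fderiv ℝ g) := hgC.continuous_fderiv one_ne_zero
  obtain ⟨D, hD⟩ := (isCompact_closedBall (0 : E) R).exists_bound_of_continuousOn hDc.continuousOn
  have hD0 : 0 ≤ D := (norm_nonneg _).trans (hD 0 (by simp [hR.le]))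
  -- positivity of the determinant near the identity
  have hdet : ∀ᶠ M in 𝓝 (0 : E →L[ℝ] E), 0 < (ContinuousLinearMap.id ℝ E + M).det := by
    have hc : Continuous fun M : E →L[ℝ] E => (ContinuousLinearMap.id ℝ E + M).det :=
      ContinuousLinearMap.continuous_det.comp (by fun_prop)
    apply hc.continuousAt.eventually_const_lt
    have : (ContinuousLinearMap.id ℝ E + 0).det = 1 := by
      rw [add_zero]; exact LinearMap.det_id
    exact lt_of_lt_of_eq one_pos this.symm
  obtain ⟨η, hη, hηd⟩ := Metric.eventually_nhds_iff.1 hdet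
  -- small parameters
  obtain ⟨τ, hτ, hτK, hτD, hτ1⟩ : ∃ τ : ℝ, 0 < τ ∧ τ * (K : ℝ) < 1 ∧ τ * D < η ∧ τ < 1 := by
    have e1 : ∀ᶠ τ in 𝓝[>] (0 : ℝ), τ * (K : ℝ) < 1 := by
      apply nhdsWithin_le_nhds
      exact (by fun_prop : Continuous fun τ : ℝ => τ * (K : ℝ)).continuousAt.eventually_lt_const (by simp)
    have e2 : ∀ᶠ τ in 𝓝[>] (0 : ℝ), τ * D < η := by
      apply nhdsWithin_le_nhds
      exact (by fun_prop : Continuous fun τ : ℝ => τ * D).continuousAt.eventually_lt_const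
        (by simpa using hη)
    have e3 : ∀ᶠ τ in 𝓝[>] (0 : ℝ), τ < 1 :=
      nhdsWithin_le_nhds (eventually_lt_nhds one_pos)
    obtain ⟨τ, h⟩ := ((e1.and (e2.and e3)).and self_mem_nhdsWithin).exists
    exact ⟨τ, h.2, h.1.1, h.1.2.1, h.1.2.2⟩
  let μ : MeasureTheory.Measure E := stdOrthonormalBasis ℝ E |>.toBasis.addHaar
  let V : ℝ := μ.real (closedBall 0 R)
  have hint : ∀ t : ℝ, 0 < t → t ≤ τ →
      ∫ x in closedBall 0 R, (ContinuousLinearMap.id ℝ E + t • fderiv ℝ g x).det ∂μ = V := by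
    intro t ht htτ
    have hlip : LipschitzOnWith (t.toNNReal * K) (fun x => t • g x) (closedBall 0 R) := by
      refine LipschitzOnWith.of_dist_le_mul fun x hx y hy => ?_
      rw [dist_smul₀, Real.norm_of_nonneg ht.le]
      have := hK.dist_le_mul x hx y hy
      rw [NNReal.coe_mul, Real.coe_toNNReal _ ht.le]
      rw [mul_assoc]
      exact mul_le_mul_of_nonneg_left this ht.le
    have hlt : (t.toNNReal * K : NNReal) < 1 := by
      rw [← NNReal.coe_lt_coe]
      rw [NNReal.coe_mul, Real.coe_toNNReal _ ht.le]
      exact lt_of_le_of_lt (mul_le_mul_of_nonneg_right htτ K.2) hτK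
    obtain ⟨hinj, himg⟩ := image_ball (fun x => t • g x) R _ hlip
      (by intro x hx; simp [g, hb x hx])
      (by
        intro x hx
        have : x + t • g x = (1 - t) • x + t • f x := by simp only [g]; module
        rw [this]
        refine (norm_add_le _ _).trans ?_
        rw [norm_smul, norm_smul, hn, Real.norm_of_nonneg ht.le,
          Real.norm_of_nonneg (by linarith)]
        nlinarith) hlt
    have hder : ∀ x ∈ closedBall (0 : E) R, HasFDerivWithinAt (fun x => x + t • g x)
        (ContinuousLinearMap.id ℝ E + t • fderiv ℝ g x) (closedBall 0 R) x := by
      intro x _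
      exact ((hasFDerivAt_id x).add
        (((hgC.differentiable one_ne_zero) x).hasFDerivAt.const_smul t)).hasFDerivWithinAt
    have h := MeasureTheory.integral_image_eq_integral_abs_det_fderiv_smul μ
      (isClosed_closedBall.measurableSet) hder hinj (fun _ => (1 : ℝ))
    rw [himg] at h
    have h2 : ∫ x in closedBall (0 : E) R, (1 : ℝ) ∂μ = V := by simp [V]
    rw [h2] at h
    rw [h]
    refine MeasureTheory.setIntegral_congr_fun isClosed_closedBall.measurableSet fun x hx => ?_
    have : 0 < (ContinuousLinearMap.id ℝ E + t • fderiv ℝ g x).det := by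
      apply hηd
      rw [dist_zero_right, norm_smul, Real.norm_of_nonneg ht.le]
      calc t * ‖fderiv ℝ g x‖ ≤ τ * D := mul_le_mul htτ (hD x hx) (norm_nonneg _) hτ.le
        _ < η := hτD
    simp [abs_of_pos this]
  obtain ⟨w, hw1, hw⟩ := det_interp (E := E) (fun i : ℕ => τ / (i + 1)) (by
    intro i j hij
    simp only at hij
    field_simp at hij
    exact_mod_cast (add_right_cancel hij).symm)
  have hzero : ∀ x, (ContinuousLinearMap.id ℝ E + fderiv ℝ g x).det = 0 := by
    intro x
    have hfd : ContinuousLinearMap.id ℝ E + fderiv ℝ g x = fderiv ℝ f x := by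
      have h1 : fderiv ℝ g x = fderiv ℝ f x - ContinuousLinearMap.id ℝ E :=
        (((hf.differentiable one_ne_zero) x).hasFDerivAt.sub (hasFDerivAt_id x)).fderiv
      rw [h1]; abel
    rw [hfd]
    by_contra hne
    have hsurj : Function.Surjective (fderiv ℝ f x) := by
      have hu : IsUnit (LinearMap.det (fderiv ℝ f x : E →ₗ[ℝ] E)) := isUnit_iff_ne_zero.2 hne
      exact (LinearEquiv.ofIsUnitDet (f := (fderiv ℝ f x : E →ₗ[ℝ] E))
        (v := Module.finBasis ℝ E) (v' := Module.finBasis ℝ E)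
        (by rwa [LinearMap.det_toMatrix])).surjective
    obtain ⟨v, hv⟩ := hsurj (f x)
    have hd := ((hf.differentiable one_ne_zero) x).hasFDerivAt
    have h1 := (hd.inner ℝ hd)
    have h2 : (fun y => inner ℝ (f y) (f y)) = fun _ => R ^ 2 := by
      funext y; rw [real_inner_self_eq_norm_sq, hn]
    rw [h2] at h1
    have h3 := congrArg (fun T => T v) (h1.unique (hasFDerivAt_const (R ^ 2) x))
    simp [hv, hn] at h3
    exact hR.ne' h3
  have hfin : (0 : ℝ) = V := by
    calc (0 : ℝ) = ∫ x in closedBall 0 R, (ContinuousLinearMap.id ℝ E + fderiv ℝ g x).det ∂μ := by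
          simp_rw [hzero]; simp
      _ = ∑ i ∈ Finset.range (Module.finrank ℝ E + 1), w i * V := by
          rw [MeasureTheory.integral_congr_ae (Filter.Eventually.of_forall fun x => hw _)]
          rw [MeasureTheory.integral_finsetSum]
          · refine Finset.sum_congr rfl fun i _ => ?_
            rw [MeasureTheory.integral_const_mul, hint _ (by positivity)]
            exact div_le_self hτ.le (by linarith [(Nat.cast_nonneg i : (0 : ℝ) ≤ i)])
          · intro i _
            apply ContinuousOn.integrableOn_compact (isCompact_closedBall _ _)
            apply Continuous.continuousOn
            exact continuous_const.mul (ContinuousLinearMap.continuous_det.comp (by fun_prop))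
      _ = V := by rw [← Finset.sum_mul, hw1, one_mul]
  have hVpos : 0 < V := by
    apply ENNReal.toReal_pos
    · exact (measure_closedBall_pos μ _ hR).ne'
    · exact MeasureTheory.measure_closedBall_lt_top.ne
  exact hVpos.ne hfin

lemma exists_zero_of_compact_pert {n : ℕ}
    (e : EuclideanSpace ℝ (Fin n) → EuclideanSpace ℝ (Fin n)) (he : Continuous e) (R : ℝ)
    (hR : 0 < R) (h0 : ∀ x, R ≤ ‖x‖ → e x = 0) : ∃ x, x + e x = 0 := by
  by_contra! hne
  obtain ⟨g, hg, hgd, hgs⟩ := he.exists_contDiff_approx 1 (ε := fun x => ‖x + e x‖)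
    (by fun_prop) (fun x => norm_pos_iff.2 (hne x))
  have hh : ∀ x, x + g x ≠ 0 := by
    intro x hx
    have h1 := hgd x
    rw [dist_eq_norm, eq_neg_of_add_eq_zero_right hx, ← norm_neg] at h1
    simp [add_comm] at h1
  have hg0 : ∀ x, R ≤ ‖x‖ → g x = 0 := by
    intro x hx
    by_contra h
    exact hgs h (h0 x hx)
  have hC : ContDiff ℝ 1 (fun x => x + g x) := contDiff_id.add hg
  refine no_retraction (fun x => (R * ‖x + g x‖⁻¹) • (x + g x)) ?_ R hR ?_ ?_
  · exact (contDiff_const.mul ((hC.norm ℝ hh).inv fun x => norm_ne_zero_iff.2 (hh x))).smul hC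
  · intro x
    have := norm_pos_iff.2 (hh x)
    rw [norm_smul, Real.norm_of_nonneg (by positivity)]
    field_simp
  · intro x hx
    simp [hg0 x hx.ge, hx, hR.ne']

lemma brouwer_half {n : ℕ}
    (φ : EuclideanSpace ℝ (Fin n) → EuclideanSpace ℝ (Fin n)) (r : ℝ) (hr : 0 < r)
    (hφ : ContinuousOn φ (closedBall 0 r)) (hb : ∀ x, ‖x‖ ≤ r → ‖φ x‖ ≤ r / 2) :
    ∃ x, ‖x‖ ≤ r ∧ φ x = x := by
  let χ : EuclideanSpace ℝ (Fin n) → ℝ := fun x => min 1 (2 - 2 * ‖x‖ / r)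
  have hχc : Continuous χ := by fun_prop
  obtain ⟨x, hx⟩ := exists_zero_of_compact_pert
    (fun x => if ‖x‖ ≤ r then - χ x • φ x else 0)
    (by
      refine continuous_if_le continuous_norm continuous_const ?_ continuousOn_const ?_
      · refine ContinuousOn.fun_smul (by fun_prop) ?_
        refine hφ.mono fun x hx => by simpa using hx
      · intro x hx
        have : χ x = 0 := by
          simp only [χ]; rw [hx, mul_div_assoc, div_self hr.ne']; norm_num
        simp [this]) r hr
    (by
      intro x hx
      by_cases h : ‖x‖ ≤ r
      · have hx' : ‖x‖ = r := le_antisymm h hx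
        have : χ x = 0 := by
          simp only [χ]; rw [hx', mul_div_assoc, div_self hr.ne']; norm_num
        simp [this]
      · simp [h])
  by_cases h : ‖x‖ ≤ r
  · simp only [h, if_true] at hx
    have hx' : x = χ x • φ x := by
      rw [neg_smul, ← sub_eq_add_neg] at hx; exact sub_eq_zero.1 hx
    have hχ1 : χ x ≤ 1 := min_le_left _ _
    have hχ0 : 0 ≤ χ x := by
      refine le_min zero_le_one ?_
      have : 2 * ‖x‖ / r ≤ 2 := by rw [div_le_iff₀ hr]; linarith
      linarith
    have hle : ‖x‖ ≤ r / 2 := by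
      have h1 : ‖x‖ = χ x * ‖φ x‖ := by
        conv_lhs => rw [hx', norm_smul, Real.norm_of_nonneg hχ0]
      rw [h1]
      exact (mul_le_of_le_one_left (norm_nonneg _) hχ1).trans (hb x h)
    have : χ x = 1 := by
      refine min_eq_left ?_
      have : 2 * ‖x‖ / r ≤ 1 := by rw [div_le_iff₀ hr]; linarith
      linarith
    rw [this, one_smul] at hx'
    exact ⟨x, h, hx'.symm⟩
  · simp only [h, if_false, add_zero] at hx
    exact absurd (by simp [hx, hr.le]) h

lemma cone_add {E : Type*} [AddCommGroup E] [Module ℝ E] {C : Set E} (hC : IsConvexCone C)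
    {a b : E} (ha : a ∈ C) (hb : b ∈ C) : a + b ∈ C := by
  have h1 : (1 / 2 : ℝ) • a + (1 / 2 : ℝ) • b ∈ C :=
    hC.2.1 ha hb (by norm_num) (by norm_num) (by norm_num)
  have h2 := hC.2.2 2 (by norm_num) _ h1
  have : (2 : ℝ) • ((1 / 2 : ℝ) • a + (1 / 2 : ℝ) • b) = a + b := by module
  rwa [this] at h2

lemma cone_sum {E ι : Type*} [AddCommGroup E] [Module ℝ E] {C : Set E} (hC : IsConvexCone C)
    (s : Finset ι) (f : ι → E) (hf : ∀ i, f i ∈ C) : ∑ i ∈ s, f i ∈ C :=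
  Finset.sum_induction f (· ∈ C) (fun _ _ => cone_add hC) hC.1 (fun i _ => hf i)

/-- Reformulation of the approximation property. -/
lemma bolt_eps {E : Type*} [NormedAddCommGroup E] [NormedSpace ℝ E] {A K : Set E} {y : E}
    (h : IsBoltyanskiCone A y K) :
    ∃ (m : ℕ) (C : Set (EuclideanSpace ℝ (Fin m))) (L : EuclideanSpace ℝ (Fin m) →ₗ[ℝ] E)
      (F : EuclideanSpace ℝ (Fin m) → E), IsConvexCone C ∧ K = ⇑L '' C ∧
      ∀ η : ℝ, 0 < η → ∃ ρ : ℝ, 0 < ρ ∧ ContinuousOn F (C ∩ closedBall 0 ρ) ∧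
        ∀ c ∈ C ∩ closedBall 0 ρ, F c ∈ A ∧ ‖F c - y - L c‖ ≤ η * ‖c‖ := by
  obtain ⟨m, C, L, δ, F, hC, hK, hδ, hFc, hFA, -, ho⟩ := h
  refine ⟨m, C, L, F, hC, hK, fun η hη => ?_⟩
  have h1 := ho.def hη
  rw [eventually_nhdsWithin_iff, Metric.eventually_nhds_iff] at h1
  obtain ⟨σ, hσ, h2⟩ := h1
  have hsub : C ∩ closedBall 0 (min δ (σ / 2)) ⊆ C ∩ closedBall 0 δ :=
    inter_subset_inter_right _ (closedBall_subset_closedBall (min_le_left _ _))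
  refine ⟨min δ (σ / 2), by positivity, hFc.mono hsub, fun c hc => ⟨hFA c (hsub hc), ?_⟩⟩
  refine h2 ?_ (hsub hc)
  have h3 : dist c 0 ≤ min δ (σ / 2) := hc.2
  have := h3.trans (min_le_right _ _)
  linarith

/-- The continuous positively homogeneous selection into the cone. -/
lemma selection {n m₁ m₂ : ℕ}
    {C₁ : Set (EuclideanSpace ℝ (Fin m₁))} {C₂ : Set (EuclideanSpace ℝ (Fin m₂))}
    (L₁ : EuclideanSpace ℝ (Fin m₁) →ₗ[ℝ] EuclideanSpace ℝ (Fin n))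
    (L₂ : EuclideanSpace ℝ (Fin m₂) →ₗ[ℝ] EuclideanSpace ℝ (Fin n))
    (hC₁ : IsConvexCone C₁) (hC₂ : IsConvexCone C₂)
    (h : ∀ v, ∃ c₁ ∈ C₁, ∃ c₂ ∈ C₂, v = L₁ c₁ - L₂ c₂) :
    ∃ (S₁ : EuclideanSpace ℝ (Fin n) → EuclideanSpace ℝ (Fin m₁))
      (S₂ : EuclideanSpace ℝ (Fin n) → EuclideanSpace ℝ (Fin m₂)),
      Continuous S₁ ∧ Continuous S₂ ∧ S₁ 0 = 0 ∧ S₂ 0 = 0 ∧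
      (∀ v, S₁ v ∈ C₁) ∧ (∀ v, S₂ v ∈ C₂) ∧ ∀ v, L₁ (S₁ v) - L₂ (S₂ v) = v := by
  choose a₁ ha₁ a₂ ha₂ hv using h
  let b : Fin n → EuclideanSpace ℝ (Fin n) := fun j => EuclideanSpace.single j (1 : ℝ)
  refine ⟨fun v => ∑ j, (max (v j) 0 • a₁ (b j) + max (-v j) 0 • a₁ (-b j)),
    fun v => ∑ j, (max (v j) 0 • a₂ (b j) + max (-v j) 0 • a₂ (-b j)),
    by fun_prop, by fun_prop, by simp, by simp, ?_, ?_, ?_⟩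
  · exact fun v => cone_sum hC₁ _ _ fun j => cone_add hC₁
      (hC₁.2.2 _ (le_max_right _ _) _ (ha₁ _)) (hC₁.2.2 _ (le_max_right _ _) _ (ha₁ _))
  · exact fun v => cone_sum hC₂ _ _ fun j => cone_add hC₂
      (hC₂.2.2 _ (le_max_right _ _) _ (ha₂ _)) (hC₂.2.2 _ (le_max_right _ _) _ (ha₂ _))
  · intro v
    simp only [map_sum, map_add, map_smul]
    rw [← Finset.sum_sub_distrib]
    have h1 : ∀ j, (max (v j) 0 • L₁ (a₁ (b j)) + max (-v j) 0 • L₁ (a₁ (-b j)) -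
        (max (v j) 0 • L₂ (a₂ (b j)) + max (-v j) 0 • L₂ (a₂ (-b j)))) = v j • b j := by
      intro j
      have e1 := hv (b j)
      have e2 := hv (-b j)
      have e3 : max (v j) 0 - max (-v j) 0 = v j := by
        rcases le_total 0 (v j) with h | h
        · rw [max_eq_left h, max_eq_right (by linarith)]; ring
        · rw [max_eq_right h, max_eq_left (by linarith)]; ring
      calc _ = max (v j) 0 • (L₁ (a₁ (b j)) - L₂ (a₂ (b j)))
            + max (-v j) 0 • (L₁ (a₁ (-b j)) - L₂ (a₂ (-b j))) := by module
        _ = max (v j) 0 • b j + max (-v j) 0 • (-b j) := by rw [← e1, ← e2]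
        _ = (max (v j) 0 - max (-v j) 0) • b j := by module
        _ = v j • b j := by rw [e3]
    rw [Finset.sum_congr rfl fun j _ => h1 j]
    ext i
    simp [b, Pi.single_apply]

/-- If the Boltyanski approximating cones at a common point are strongly
transversal, then the sets are not locally separated there. -/
theorem not_locally_separated_of_stronglyTransversal {n : ℕ}
    (A₁ A₂ K₁ K₂ : Set (EuclideanSpace ℝ (Fin n))) (x : EuclideanSpace ℝ (Fin n))
    (hx : x ∈ A₁ ∩ A₂)
    (h₁ : IsBoltyanskiCone A₁ x K₁) (h₂ : IsBoltyanskiCone A₂ x K₂)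
    (hst : StronglyTransversal K₁ K₂) :
    ¬ LocallySeparated A₁ A₂ x := by
  rintro ⟨N, hN, hsep⟩
  obtain ⟨m₁, C₁, L₁, F₁, hC₁, hK₁, hF₁⟩ := bolt_eps h₁
  obtain ⟨m₂, C₂, L₂, F₂, hC₂, hK₂, hF₂⟩ := bolt_eps h₂
  obtain ⟨htr, hne⟩ := hst
  obtain ⟨S₁, S₂, hS₁c, hS₂c, hS₁0, hS₂0, hS₁, hS₂, hS⟩ := selection L₁ L₂ hC₁ hC₂ (by
    intro v
    have hv : v ∈ {x | ∃ k₁ ∈ K₁, ∃ k₂ ∈ K₂, x = k₁ - k₂} := by rw [htr]; trivial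
    obtain ⟨k₁, hk₁, k₂, hk₂, rfl⟩ := hv
    rw [hK₁] at hk₁
    rw [hK₂] at hk₂
    obtain ⟨c₁, hc₁, rfl⟩ := hk₁
    obtain ⟨c₂, hc₂, rfl⟩ := hk₂
    exact ⟨c₁, hc₁, c₂, hc₂, rfl⟩)
  obtain ⟨k, hk, hk0⟩ : ∃ k ∈ K₁ ∩ K₂, k ≠ 0 := by
    by_contra! hcon
    apply hne
    refine Subset.antisymm (fun k hk => hcon k hk) ?_
    rintro _ rfl
    exact ⟨hK₁ ▸ ⟨0, hC₁.1, map_zero _⟩, hK₂ ▸ ⟨0, hC₂.1, map_zero _⟩⟩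
  obtain ⟨c₁, hc₁, hk₁⟩ : k ∈ L₁ '' C₁ := hK₁ ▸ hk.1
  obtain ⟨c₂, hc₂, hk₂⟩ : k ∈ L₂ '' C₂ := hK₂ ▸ hk.2
  have hkpos : 0 < ‖k‖ := norm_pos_iff.2 hk0
  have hL₁c : Continuous L₁ := L₁.continuous_of_finiteDimensional
  -- the affine family in the cones
  have hP : ∀ v, L₁ (c₁ + S₁ v) - L₂ (c₂ + S₂ v) = v := by
    intro v
    rw [map_add, map_add, hk₁, hk₂, add_sub_add_left_eq_sub, hS]
  have hnear : ∀ᶠ v in 𝓝 (0 : EuclideanSpace ℝ (Fin n)), ‖L₁ (c₁ + S₁ v) - k‖ < ‖k‖ / 2 := by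
    have hc : Continuous fun v => ‖L₁ (c₁ + S₁ v) - k‖ := by fun_prop
    refine hc.continuousAt.eventually_lt_const ?_
    simp only [hS₁0, add_zero, hk₁, sub_self, norm_zero]
    positivity
  obtain ⟨r₀, hr₀, hnear⟩ := Metric.eventually_nhds_iff.1 hnear
  obtain ⟨r, hr, hrr₀⟩ := exists_between hr₀
  obtain ⟨M₁, hM₁⟩ := (isCompact_closedBall (0 : EuclideanSpace ℝ (Fin n)) r).exists_bound_of_continuousOn
    (f := fun v => c₁ + S₁ v) (by fun_prop)
  obtain ⟨M₂, hM₂⟩ := (isCompact_closedBall (0 : EuclideanSpace ℝ (Fin n)) r).exists_bound_of_continuousOn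
    (f := fun v => c₂ + S₂ v) (by fun_prop)
  set M := max 1 (max M₁ M₂) with hMdef
  have hM : 0 < M := lt_of_lt_of_le one_pos (le_max_left _ _)
  have hMM₁ : M₁ ≤ M := (le_max_left _ _).trans (le_max_right _ _)
  have hMM₂ : M₂ ≤ M := (le_max_right _ _).trans (le_max_right _ _)
  set κ := min (r / 4) (‖k‖ / 4) with hκ
  have hκpos : 0 < κ := by positivity
  have hκr : κ ≤ r / 4 := min_le_left _ _
  have hκk : κ ≤ ‖k‖ / 4 := min_le_right _ _
  obtain ⟨ρ₁, hρ₁, hF₁c, hF₁⟩ := hF₁ (κ / M) (by positivity)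
  obtain ⟨ρ₂, hρ₂, hF₂c, hF₂⟩ := hF₂ (κ / M) (by positivity)
  obtain ⟨s, hs, hsN⟩ := Metric.mem_nhds_iff.1 hN
  set ε := min (min (ρ₁ / M) (ρ₂ / M)) (s / (4 * ‖k‖)) with hε
  have hεpos : 0 < ε := by positivity
  have hε₁ : ε * M ≤ ρ₁ := by
    rw [← le_div_iff₀ hM]; exact (min_le_left _ _).trans (min_le_left _ _)
  have hε₂ : ε * M ≤ ρ₂ := by
    rw [← le_div_iff₀ hM]; exact (min_le_left _ _).trans (min_le_right _ _)
  have hεs : ε * (4 * ‖k‖) ≤ s := by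
    rw [← le_div_iff₀ (by positivity)]; exact min_le_right _ _
  have hnorm₁ : ∀ v, ‖v‖ ≤ r → ‖ε • (c₁ + S₁ v)‖ ≤ ε * M := by
    intro v hv
    rw [norm_smul, Real.norm_of_nonneg hεpos.le]
    exact mul_le_mul_of_nonneg_left ((hM₁ v (by simpa using hv)).trans hMM₁) hεpos.le
  have hnorm₂ : ∀ v, ‖v‖ ≤ r → ‖ε • (c₂ + S₂ v)‖ ≤ ε * M := by
    intro v hv
    rw [norm_smul, Real.norm_of_nonneg hεpos.le]
    exact mul_le_mul_of_nonneg_left ((hM₂ v (by simpa using hv)).trans hMM₂) hεpos.le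
  have hmem₁ : ∀ v, ‖v‖ ≤ r → ε • (c₁ + S₁ v) ∈ C₁ ∩ closedBall 0 ρ₁ := fun v hv =>
    ⟨hC₁.2.2 _ hεpos.le _ (cone_add hC₁ hc₁ (hS₁ v)),
      by simpa using (hnorm₁ v hv).trans hε₁⟩
  have hmem₂ : ∀ v, ‖v‖ ≤ r → ε • (c₂ + S₂ v) ∈ C₂ ∩ closedBall 0 ρ₂ := fun v hv =>
    ⟨hC₂.2.2 _ hεpos.le _ (cone_add hC₂ hc₂ (hS₂ v)),
      by simpa using (hnorm₂ v hv).trans hε₂⟩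
  have herr₁ : ∀ v, ‖v‖ ≤ r →
      ‖F₁ (ε • (c₁ + S₁ v)) - x - ε • L₁ (c₁ + S₁ v)‖ ≤ κ * ε := by
    intro v hv
    rw [← map_smul]
    refine (hF₁ _ (hmem₁ v hv)).2.trans ?_
    calc κ / M * ‖ε • (c₁ + S₁ v)‖ ≤ κ / M * (ε * M) :=
          mul_le_mul_of_nonneg_left (hnorm₁ v hv) (by positivity)
      _ = κ * ε := by field_simp
  have herr₂ : ∀ v, ‖v‖ ≤ r →
      ‖F₂ (ε • (c₂ + S₂ v)) - x - ε • L₂ (c₂ + S₂ v)‖ ≤ κ * ε := by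
    intro v hv
    rw [← map_smul]
    refine (hF₂ _ (hmem₂ v hv)).2.trans ?_
    calc κ / M * ‖ε • (c₂ + S₂ v)‖ ≤ κ / M * (ε * M) :=
          mul_le_mul_of_nonneg_left (hnorm₂ v hv) (by positivity)
      _ = κ * ε := by field_simp
  obtain ⟨v, hv, hfix⟩ := brouwer_half
    (fun v => v - ε⁻¹ • (F₁ (ε • (c₁ + S₁ v)) - F₂ (ε • (c₂ + S₂ v)))) r hr
    (by
      have e1 : ContinuousOn (fun v => F₁ (ε • (c₁ + S₁ v))) (closedBall 0 r) :=
        hF₁c.comp (by fun_prop) fun v hv => hmem₁ v (by simpa using hv)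
      have e2 : ContinuousOn (fun v => F₂ (ε • (c₂ + S₂ v))) (closedBall 0 r) :=
        hF₂c.comp (by fun_prop) fun v hv => hmem₂ v (by simpa using hv)
      exact continuousOn_id.sub ((e1.sub e2).const_smul ε⁻¹))
    (by
      intro v hv
      have e1 := herr₁ v hv
      have e2 := herr₂ v hv
      have key : v - ε⁻¹ • (F₁ (ε • (c₁ + S₁ v)) - F₂ (ε • (c₂ + S₂ v))) =
          ε⁻¹ • ((F₂ (ε • (c₂ + S₂ v)) - x - ε • L₂ (c₂ + S₂ v)) -
            (F₁ (ε • (c₁ + S₁ v)) - x - ε • L₁ (c₁ + S₁ v))) := by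
        have h1 : v = ε⁻¹ • (ε • (L₁ (c₁ + S₁ v) - L₂ (c₂ + S₂ v))) := by
          rw [hP, inv_smul_smul₀ hεpos.ne']
        conv_lhs => rw [h1, ← smul_sub]
        rw [← h1]
        congr 1
        module
      rw [key, norm_smul, Real.norm_of_nonneg (by positivity)]
      have h3 := (norm_sub_le (F₂ (ε • (c₂ + S₂ v)) - x - ε • L₂ (c₂ + S₂ v))
            (F₁ (ε • (c₁ + S₁ v)) - x - ε • L₁ (c₁ + S₁ v))).trans (add_le_add e2 e1)
      rw [inv_mul_le_iff₀ hεpos]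
      nlinarith)
  have heq : F₁ (ε • (c₁ + S₁ v)) = F₂ (ε • (c₂ + S₂ v)) := by
    have h1 : ε⁻¹ • (F₁ (ε • (c₁ + S₁ v)) - F₂ (ε • (c₂ + S₂ v))) = 0 := by
      simpa using hfix
    rcases smul_eq_zero.1 h1 with h | h
    · exact absurd h (inv_ne_zero hεpos.ne')
    · exact sub_eq_zero.1 h
  have hA₁ := (hF₁ _ (hmem₁ v hv)).1
  have hA₂ := (hF₂ _ (hmem₂ v hv)).1
  rw [← heq] at hA₂
  have hn := hnear (show dist v 0 < r₀ by rw [dist_zero_right]; exact lt_of_le_of_lt hv hrr₀)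
  have e1 := herr₁ v hv
  -- distance from `F₁` to `x + ε k`
  have hd : ‖F₁ (ε • (c₁ + S₁ v)) - x - ε • k‖ ≤ ε * (3 / 4 * ‖k‖) := by
    have h1 : F₁ (ε • (c₁ + S₁ v)) - x - ε • k =
        (F₁ (ε • (c₁ + S₁ v)) - x - ε • L₁ (c₁ + S₁ v)) + ε • (L₁ (c₁ + S₁ v) - k) := by module
    rw [h1]
    refine (norm_add_le _ _).trans ?_
    rw [norm_smul, Real.norm_of_nonneg hεpos.le]
    nlinarith
  have hεk : ‖ε • k‖ = ε * ‖k‖ := by rw [norm_smul, Real.norm_of_nonneg hεpos.le]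
  have hpos : 0 < ε * ‖k‖ := by positivity
  have hNmem : F₁ (ε • (c₁ + S₁ v)) ∈ N := by
    apply hsN
    rw [mem_ball, dist_eq_norm]
    have := norm_le_norm_sub_add (F₁ (ε • (c₁ + S₁ v)) - x) (ε • k)
    linarith
  have hxe : F₁ (ε • (c₁ + S₁ v)) = x := by
    have : F₁ (ε • (c₁ + S₁ v)) ∈ A₁ ∩ A₂ ∩ N := ⟨⟨hA₁, hA₂⟩, hNmem⟩
    rw [hsep] at this
    exact this
  rw [hxe, sub_self, zero_sub, norm_neg, hεk] at hd
  linarith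
end

section
/- (Abstract Maximum Principle) Let Ω ⊆ ℝⁿ be open, let 𝒰 be a set, let y : 𝒰 → Ω be a map, let 𝒮 ⊆ Ω, and let Ψ : Ω → ℝ be differentiable. Let 𝒰̂ ⊆ 𝒰 and let (u⋆, y⋆) with y⋆ = y[u⋆] ∈ 𝒮 be a 𝒰̂-minimizer, i.e. Ψ(y[u]) ≥ Ψ(y⋆) for every u ∈ 𝒰̂ with y[u] ∈ 𝒮. Let 𝒰⋆ ⊆ 𝒰̂ be a subfamily with u⋆ ∈ 𝒰⋆, and let S and R be Boltyanski approximating cones at y⋆ to the target 𝒮 and to the 𝒰⋆-reachable set y[𝒰⋆] := {y[u] : u ∈ 𝒰⋆}, respectively. Then there exists a linear form (λ, λ_c) ∈ (ℝ^{n+1})* with λ_c ≤ 0 such that: (Nontriviality) (λ, λ_c) ≠ 0; (Maximization) max{(λ + λ_c ∇Ψ(y⋆))·v : v ∈ R} = 0; (Non-transversality) λ ∈ −S⊥. -/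
open Set Metric Filter Asymptotics Topology

/-- `det (1 + t A) * (1 - |x + t w|^2 / M^2)^k` as a polynomial in `t`. -/
lemma amp_poly {n : ℕ} (A : EuclideanSpace ℝ (Fin n) →L[ℝ] EuclideanSpace ℝ (Fin n))
    (x w : EuclideanSpace ℝ (Fin n)) (M : ℝ) (k : ℕ) :
    ∃ p : Polynomial ℝ, p.natDegree ≤ n + k * 2 ∧ ∀ t : ℝ, p.eval t =
      (ContinuousLinearMap.id ℝ (EuclideanSpace ℝ (Fin n)) + t • A).det *
        (1 - ‖x + t • w‖ ^ 2 / M ^ 2) ^ k := by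
  classical
  let b := (EuclideanSpace.basisFun (Fin n) ℝ).toBasis
  let A' : Matrix (Fin n) (Fin n) ℝ := LinearMap.toMatrix b b (A : _ →ₗ[ℝ] _)
  let p1 : Polynomial ℝ := Matrix.det ((Polynomial.X : Polynomial ℝ) • A'.map Polynomial.C
    + (1 : Matrix (Fin n) (Fin n) ℝ).map Polynomial.C)
  let p2 : Polynomial ℝ := Polynomial.C (-(‖w‖ ^ 2 / M ^ 2)) * Polynomial.X ^ 2
    + Polynomial.C (-(2 * inner ℝ x w / M ^ 2)) * Polynomial.X
    + Polynomial.C (1 - ‖x‖ ^ 2 / M ^ 2)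
  refine ⟨p1 * p2 ^ k, ?_, ?_⟩
  · refine Polynomial.natDegree_mul_le.trans (add_le_add ?_ ?_)
    · exact (Polynomial.natDegree_det_X_add_C_le A' 1).trans (by simp)
    · refine Polynomial.natDegree_pow_le.trans (Nat.mul_le_mul_left k ?_)
      exact Polynomial.natDegree_quadratic_le
  · intro t
    rw [Polynomial.eval_mul, Polynomial.eval_pow]
    congr 1
    · have h1 : (ContinuousLinearMap.id ℝ (EuclideanSpace ℝ (Fin n)) + t • A).det
          = Matrix.det (1 + t • A') := by
        rw [ContinuousLinearMap.det, ← LinearMap.det_toMatrix b]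
        congr 1
        simp only [ContinuousLinearMap.toLinearMap_add, ContinuousLinearMap.toLinearMap_smul, map_add, map_smul, A']
        congr 1
        exact LinearMap.toMatrix_id b
      rw [h1]
      simp only [p1]
      rw [← Polynomial.coe_evalRingHom, RingHom.map_det]
      congr 1
      ext i j
      simp [Matrix.one_apply, add_comm]
      split_ifs <;> simp [mul_comm]
    · congr 1
      rw [norm_add_sq_real, norm_smul, mul_pow, inner_smul_right]
      simp [p2]
      ring

/-- Interpolation: an integral which is polynomial in the parameter and constant for small
parameters is constant. -/
lemma amp_interp {α : Type*} [MeasurableSpace α] (μ : MeasureTheory.Measure α) (N : ℕ)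
    (D : ℝ → α → ℝ)
    (hD : ∀ x, ∃ p : Polynomial ℝ, p.natDegree ≤ N ∧ ∀ t, p.eval t = D t x)
    (hinteg : ∀ t, MeasureTheory.Integrable (D t) μ) (c t0 : ℝ) (ht0 : 0 < t0)
    (hc : ∀ t, 0 < t → t < t0 → ∫ x, D t x ∂μ = c) :
    ∫ x, D 1 x ∂μ = c := by
  classical
  let s := Finset.range (N + 1)
  let v : ℕ → ℝ := fun i => t0 / (i + 2)
  have hv : Set.InjOn v s := by
    intro i _ j _ hij
    have h1 : (0:ℝ) < i + 2 := by positivity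
    have h2 : (0:ℝ) < j + 2 := by positivity
    simp only [v] at hij
    rw [div_eq_div_iff h1.ne' h2.ne'] at hij
    have := mul_left_cancel₀ ht0.ne' hij
    exact_mod_cast (by linarith : (i:ℝ) = j)
  have key : ∀ x, D 1 x = ∑ i ∈ s, D (v i) x * (Lagrange.basis s v i).eval 1 := by
    intro x
    obtain ⟨p, hp, hpe⟩ := hD x
    have hdeg : p.degree < s.card := by
      rw [Finset.card_range]
      exact lt_of_le_of_lt Polynomial.degree_le_natDegree (by exact_mod_cast Nat.lt_succ_of_le hp)
    have h := Lagrange.eq_interpolate hv hdeg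
    rw [← hpe]
    conv_lhs => rw [h]
    rw [Lagrange.interpolate_apply, Polynomial.eval_finsetSum]
    simp [hpe]
  have hv0 : ∀ i, 0 < v i ∧ v i < t0 := by
    intro i
    have h1 : (0:ℝ) < i + 2 := by positivity
    refine ⟨by positivity, ?_⟩
    rw [div_lt_iff₀ h1]
    have : (0:ℝ) ≤ i := by positivity
    nlinarith
  have hsum := Lagrange.sum_basis hv (by simp [s])
  simp_rw [key]
  rw [MeasureTheory.integral_finsetSum _ (fun i _ => (hinteg _).mul_const _)]
  simp_rw [MeasureTheory.integral_mul_const, hc _ (hv0 _).1 (hv0 _).2]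
  rw [← Finset.mul_sum, ← Polynomial.eval_finsetSum, hsum]
  simp

/-- Change of variables for small parameters. -/
lemma amp_cov {n : ℕ} (h : EuclideanSpace ℝ (Fin n) → EuclideanSpace ℝ (Fin n))
    (hh : ContDiff ℝ 1 h) (hc : HasCompactSupport h) (R : ℝ)
    (hR : ∀ x, R < ‖x‖ → h x = 0) :
    ∃ t0 : ℝ, 0 < t0 ∧ ∀ t, 0 < t → t < t0 → ∀ f : EuclideanSpace ℝ (Fin n) → ℝ,
      ∫ x in closedBall 0 R, (ContinuousLinearMap.id ℝ (EuclideanSpace ℝ (Fin n))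
        + t • fderiv ℝ h x).det * f (x + t • h x) = ∫ x in closedBall 0 R, f x := by
  obtain ⟨K, hK⟩ := hh.lipschitzWith_of_hasCompactSupport hc one_ne_zero
  have hdet : ∀ᶠ A in 𝓝 (ContinuousLinearMap.id ℝ (EuclideanSpace ℝ (Fin n))), 0 < A.det := by
    have h1 : ContinuousAt (fun A : EuclideanSpace ℝ (Fin n) →L[ℝ] EuclideanSpace ℝ (Fin n)
        => A.det) (ContinuousLinearMap.id ℝ _) := ContinuousLinearMap.continuous_det.continuousAt
    refine h1.eventually (lt_mem_nhds ?_)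
    simp [ContinuousLinearMap.det]
  obtain ⟨η, hη, hball⟩ := Metric.eventually_nhds_iff.1 hdet
  have hK1 : (0:ℝ) < K + 1 := by positivity
  refine ⟨min η 1 / (K + 1), by positivity, ?_⟩
  intro t ht htt f
  rw [lt_div_iff₀ hK1] at htt
  have htK1 : t * K < 1 := by
    have := htt.trans_le (min_le_right _ _)
    nlinarith
  have htKη : t * K < η := by
    have := htt.trans_le (min_le_left _ _)
    nlinarith
  set φ : EuclideanSpace ℝ (Fin n) → EuclideanSpace ℝ (Fin n) := fun x => x + t • h x with hφ
  have hlip : ∀ x y, ‖t • h x - t • h y‖ ≤ t * K * ‖x - y‖ := by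
    intro x y
    rw [← smul_sub, norm_smul, Real.norm_of_nonneg ht.le, mul_assoc]
    have := hK.dist_le_mul x y
    rw [dist_eq_norm, dist_eq_norm] at this
    gcongr
  have hinj : Function.Injective φ := by
    intro x y hxy
    have h1 := hlip x y
    have h2 : t • h x - t • h y = - (x - y) := by
      simp only [hφ] at hxy
      have : t • h x = y + t • h y - x := by rw [← hxy]; abel
      rw [this]; abel
    rw [h2, norm_neg] at h1
    have h3 : ‖x - y‖ = 0 := by
      by_contra h0
      have : 0 < ‖x - y‖ := lt_of_le_of_ne (norm_nonneg _) (Ne.symm h0)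
      nlinarith
    exact sub_eq_zero.1 (norm_eq_zero.1 h3)
  have hsurj : Function.Surjective φ := by
    intro y
    have hcw : ContractingWith ⟨t * K, by positivity⟩ (fun x => y - t • h x) := by
      refine ⟨by exact_mod_cast htK1, LipschitzWith.of_dist_le_mul ?_⟩
      intro a b
      rw [dist_eq_norm, dist_eq_norm]
      have := hlip b a
      rw [norm_sub_rev b a] at this
      rw [sub_sub_sub_cancel_left]
      exact this
    refine ⟨hcw.fixedPoint, ?_⟩
    have := hcw.fixedPoint_isFixedPt
    simp only [Function.IsFixedPt] at this
    simp only [hφ]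
    nth_rewrite 1 [← this]
    abel
  have hout : ∀ x, x ∉ closedBall (0 : EuclideanSpace ℝ (Fin n)) R → φ x = x := by
    intro x hx
    have : h x = 0 := hR x (by simpa using hx)
    simp [hφ, this]
  have himg : φ '' closedBall 0 R = closedBall 0 R := by
    apply Subset.antisymm
    · rintro _ ⟨x, hx, rfl⟩
      by_contra hcon
      have := hinj (hout _ hcon)
      rw [this] at hcon
      exact hcon hx
    · intro y hy
      obtain ⟨x, rfl⟩ := hsurj y
      refine ⟨x, ?_, rfl⟩
      by_contra hcon
      rw [hout _ hcon] at hy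
      exact hcon hy
  have hder : ∀ x ∈ closedBall (0 : EuclideanSpace ℝ (Fin n)) R, HasFDerivWithinAt φ
      (ContinuousLinearMap.id ℝ (EuclideanSpace ℝ (Fin n)) + t • fderiv ℝ h x)
      (closedBall 0 R) x := by
    intro x _
    have := (hh.differentiable one_ne_zero x).hasFDerivAt
    exact ((hasFDerivAt_id x).add (this.const_smul t)).hasFDerivWithinAt
  have := MeasureTheory.integral_image_eq_integral_abs_det_fderiv_smul MeasureTheory.volume
    measurableSet_closedBall hder hinj.injOn f
  rw [himg] at this
  rw [this]
  apply MeasureTheory.integral_congr_ae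
  filter_upwards with x
  rw [abs_of_pos, smul_eq_mul]
  apply hball
  rw [dist_eq_norm, add_sub_cancel_left, norm_smul, Real.norm_of_nonneg ht.le]
  have h5 : ‖fderiv ℝ h x‖ ≤ K := norm_fderiv_le_of_lipschitz ℝ hK
  nlinarith

lemma amp_smooth {n : ℕ} (h : EuclideanSpace ℝ (Fin n) → EuclideanSpace ℝ (Fin n))
    (hh : ContDiff ℝ 1 h) (hc : HasCompactSupport h) : ∃ x, x + h x = 0 := by
  by_contra! hne
  obtain ⟨R0, hR0⟩ := hc.isCompact.isBounded.subset_closedBall (0 : EuclideanSpace ℝ (Fin n))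
  set R := max R0 1 with hRdef
  have hR1 : 1 ≤ R := le_max_right _ _
  have hR : ∀ x, R < ‖x‖ → h x = 0 := by
    intro x hx
    by_contra h0
    have := hR0 (subset_tsupport _ h0)
    rw [mem_closedBall_zero_iff] at this
    exact absurd (this.trans (le_max_left _ _)) (not_le.2 hx)
  have hcont : Continuous fun x => ‖x + h x‖ := by
    have := hh.continuous
    fun_prop
  have hdcont : Continuous fun x => (ContinuousLinearMap.id ℝ (EuclideanSpace ℝ (Fin n))
        + (1:ℝ) • fderiv ℝ h x).det := by
    have := hh.continuous_fderiv one_ne_zero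
    exact ContinuousLinearMap.continuous_det.comp (by fun_prop)
  have hcpt : IsCompact (closedBall (0 : EuclideanSpace ℝ (Fin n)) R) := isCompact_closedBall _ _
  have hnemp : (closedBall (0 : EuclideanSpace ℝ (Fin n)) R).Nonempty := ⟨0, by simp; linarith⟩
  obtain ⟨xm, hxm, hmin⟩ := hcpt.exists_isMinOn hnemp hcont.continuousOn
  obtain ⟨xM, hxM, hmax⟩ := hcpt.exists_isMaxOn hnemp hcont.continuousOn
  obtain ⟨D, hD⟩ := hcpt.exists_bound_of_continuousOn hdcont.continuousOn
  set r := ‖xm + h xm‖ with hr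
  have hr0 : 0 < r := norm_pos_iff.2 (hne _)
  set M := max R ‖xM + h xM‖ with hM
  have hM0 : 0 < M := lt_of_lt_of_le (by linarith) (le_max_left _ _)
  have hrM : r ≤ M := (hmin hxM).trans (le_max_right _ _)
  have hφM : ∀ x ∈ closedBall (0 : EuclideanSpace ℝ (Fin n)) R, ‖x + h x‖ ≤ M :=
    fun x hx => (hmax hx).trans (le_max_right _ _)
  have hxM' : ∀ x ∈ closedBall (0 : EuclideanSpace ℝ (Fin n)) R, ‖x‖ ≤ M :=
    fun x hx => (mem_closedBall_zero_iff.1 hx).trans (le_max_left _ _)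
  obtain ⟨t0, ht0, hcov⟩ := amp_cov h hh hc R hR
  have hid : ∀ k : ℕ, ∫ x in closedBall 0 R, (ContinuousLinearMap.id ℝ
      (EuclideanSpace ℝ (Fin n)) + (1:ℝ) • fderiv ℝ h x).det *
        (1 - ‖x + (1:ℝ) • h x‖ ^ 2 / M ^ 2) ^ k =
      ∫ x in closedBall (0 : EuclideanSpace ℝ (Fin n)) R, (1 - ‖x‖ ^ 2 / M ^ 2) ^ k := by
    intro k
    refine amp_interp _ (n + k * 2) (fun t x => (ContinuousLinearMap.id ℝ
      (EuclideanSpace ℝ (Fin n)) + t • fderiv ℝ h x).det *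
        (1 - ‖x + t • h x‖ ^ 2 / M ^ 2) ^ k) (fun x => amp_poly _ _ _ _ _) ?_ _ t0 ht0 ?_
    · intro t
      have h1 := hh.continuous_fderiv one_ne_zero
      have h2 := hh.continuous
      have h3 : Continuous fun x => (ContinuousLinearMap.id ℝ (EuclideanSpace ℝ (Fin n))
        + t • fderiv ℝ h x).det := ContinuousLinearMap.continuous_det.comp (by fun_prop)
      exact ContinuousOn.integrableOn_compact hcpt (h3.mul (by fun_prop)).continuousOn
    · intro t h1 h2
      exact hcov t h1 h2 (fun z => (1 - ‖z‖ ^ 2 / M ^ 2) ^ k)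
  set V := MeasureTheory.volume.real (closedBall (0 : EuclideanSpace ℝ (Fin n)) R) with hV
  set s := min (r / 2) 1 with hs
  have hs0 : 0 < s := by positivity
  have hsr : s < r := (min_le_left _ _).trans_lt (by linarith)
  have hsR : s ≤ R := (min_le_right _ _).trans hR1
  set W := MeasureTheory.volume.real (closedBall (0 : EuclideanSpace ℝ (Fin n)) s) with hW
  have hW0 : 0 < W := by
    rw [hW, MeasureTheory.measureReal_def]
    exact ENNReal.toReal_pos (measure_closedBall_pos _ _ hs0).ne' MeasureTheory.measure_closedBall_lt_top.ne
  set q := 1 - r ^ 2 / M ^ 2 with hq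
  set q' := 1 - s ^ 2 / M ^ 2 with hq'
  have hM2 : 0 < M ^ 2 := by positivity
  have hle1 : ∀ a : ℝ, 0 ≤ a → a ≤ M → 0 ≤ 1 - a ^ 2 / M ^ 2 := by
    intro a ha haM
    rw [sub_nonneg, div_le_one hM2]
    gcongr
  have hq0 : 0 ≤ q := hle1 r hr0.le hrM
  have hqq : q < q' := by
    simp only [hq, hq']
    gcongr
  have hq'0 : 0 < q' := hq0.trans_lt hqq
  have hup : ∀ k : ℕ, ∫ x in closedBall (0 : EuclideanSpace ℝ (Fin n)) R,
      (1 - ‖x‖ ^ 2 / M ^ 2) ^ k ≤ D * q ^ k * V := by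
    intro k
    rw [← hid k]
    refine (le_abs_self _).trans ?_
    rw [← Real.norm_eq_abs]
    refine MeasureTheory.norm_setIntegral_le_of_norm_le_const MeasureTheory.measure_closedBall_lt_top ?_
    intro x hx
    rw [norm_mul, one_smul ℝ (h x), norm_pow]
    have h1 := hD x hx
    have h2 := hle1 ‖x + h x‖ (norm_nonneg _) (hφM x hx)
    rw [Real.norm_of_nonneg h2]
    have h3 : r ≤ ‖x + h x‖ := hmin hx
    have hD0 : 0 ≤ D := (norm_nonneg _).trans h1
    simp only [hq]
    gcongr
  have hlow : ∀ k : ℕ, q' ^ k * W ≤ ∫ x in closedBall (0 : EuclideanSpace ℝ (Fin n)) R,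
      (1 - ‖x‖ ^ 2 / M ^ 2) ^ k := by
    intro k
    have hinteg : MeasureTheory.IntegrableOn (fun x : EuclideanSpace ℝ (Fin n) =>
        (1 - ‖x‖ ^ 2 / M ^ 2) ^ k) (closedBall 0 R) :=
      ContinuousOn.integrableOn_compact hcpt (by fun_prop)
    have hsub : closedBall (0 : EuclideanSpace ℝ (Fin n)) s ⊆ closedBall 0 R :=
      closedBall_subset_closedBall hsR
    calc q' ^ k * W ≤ ∫ x in closedBall (0 : EuclideanSpace ℝ (Fin n)) s,
          (1 - ‖x‖ ^ 2 / M ^ 2) ^ k := by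
          refine MeasureTheory.setIntegral_ge_of_const_le_real measurableSet_closedBall
            MeasureTheory.measure_closedBall_lt_top.ne ?_ (hinteg.mono_set hsub)
          intro x hx
          rw [mem_closedBall_zero_iff] at hx
          simp only [hq']
          have := hq'0.le
          gcongr
      _ ≤ _ := by
          refine MeasureTheory.setIntegral_mono_set hinteg ?_ hsub.eventuallyLE
          refine (MeasureTheory.ae_restrict_iff' measurableSet_closedBall).2 ?_
          filter_upwards with x hx
          exact pow_nonneg (hle1 _ (norm_nonneg _) (hxM' x hx)) k
  have hlim : Tendsto (fun k : ℕ => D * V * (q / q') ^ k) atTop (𝓝 (D * V * 0)) :=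
    (tendsto_pow_atTop_nhds_zero_of_lt_one (by positivity)
      ((div_lt_one hq'0).2 hqq)).const_mul _
  have : W ≤ D * V * 0 := by
    refine ge_of_tendsto' hlim fun k => ?_
    have := (hlow k).trans (hup k)
    rw [div_pow, ← mul_div_assoc, le_div_iff₀ (by positivity)]
    linarith
  linarith

lemma amp_cont {n : ℕ} (h : EuclideanSpace ℝ (Fin n) → EuclideanSpace ℝ (Fin n))
    (hh : Continuous h) (hc : HasCompactSupport h) : ∃ x, x + h x = 0 := by
  by_contra! hne
  obtain ⟨R0, hR0⟩ := hc.isCompact.isBounded.subset_closedBall (0 : EuclideanSpace ℝ (Fin n))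
  set R := max R0 1 with hRdef
  have hR1 : 1 ≤ R := le_max_right _ _
  have hR : ∀ x, R < ‖x‖ → h x = 0 := by
    intro x hx
    by_contra h0
    have := hR0 (subset_tsupport _ h0)
    rw [mem_closedBall_zero_iff] at this
    exact absurd (this.trans (le_max_left _ _)) (not_le.2 hx)
  have hcont : Continuous fun x => ‖x + h x‖ := by fun_prop
  have hcpt : IsCompact (closedBall (0 : EuclideanSpace ℝ (Fin n)) R) := isCompact_closedBall _ _
  have hnemp : (closedBall (0 : EuclideanSpace ℝ (Fin n)) R).Nonempty := ⟨0, by simp; linarith⟩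
  obtain ⟨xm, hxm, hmin⟩ := hcpt.exists_isMinOn hnemp hcont.continuousOn
  set r := min ‖xm + h xm‖ 1 with hr
  have hr0 : 0 < r := lt_min (norm_pos_iff.2 (hne _)) one_pos
  have hlow : ∀ x, r ≤ ‖x + h x‖ := by
    intro x
    by_cases hx : x ∈ closedBall (0 : EuclideanSpace ℝ (Fin n)) R
    · exact (min_le_left _ _).trans (hmin hx)
    · have hx' : R < ‖x‖ := by simpa using hx
      rw [hR x hx', add_zero]
      exact (min_le_right _ _).trans (hR1.trans hx'.le)
  have huc : UniformContinuous h := hc.uniformContinuous_of_continuous hh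
  obtain ⟨g, hg, hgh⟩ := huc.exists_contDiff_dist_le hr0
  let χ : ContDiffBump (0 : EuclideanSpace ℝ (Fin n)) :=
    ⟨R, R + 1, by linarith, by linarith⟩
  have hg1 : ContDiff ℝ 1 g := hg.of_le (by exact_mod_cast le_top)
  have hχ : ContDiff ℝ 1 (fun x => χ x • g x) := χ.contDiff.smul hg1
  have hχc : HasCompactSupport (fun x => χ x • g x) := χ.hasCompactSupport.smul_right
  obtain ⟨x, hx⟩ := amp_smooth _ hχ hχc
  have h1 : h x = χ x • h x := by
    by_cases hx : x ∈ closedBall (0 : EuclideanSpace ℝ (Fin n)) R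
    · rw [χ.one_of_mem_closedBall hx, one_smul]
    · have hx' : R < ‖x‖ := by simpa using hx
      rw [hR x hx', smul_zero]
  have h2 : x + h x = χ x • (h x - g x) := by
    rw [smul_sub, ← h1]
    have : x = - (χ x • g x) := eq_neg_of_add_eq_zero_left hx
    nth_rewrite 1 [this]
    abel
  have h3 := hlow x
  rw [h2, norm_smul, Real.norm_of_nonneg χ.nonneg] at h3
  have h4 := hgh x
  rw [dist_eq_norm, norm_sub_rev] at h4
  have h5 : χ x ≤ 1 := χ.le_one
  have h6 : 0 ≤ χ x := χ.nonneg
  nlinarith [norm_nonneg (h x - g x)]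

lemma amp_zero {n : ℕ} (e : EuclideanSpace ℝ (Fin n) → EuclideanSpace ℝ (Fin n))
    (ρ : ℝ) (hρ : 0 < ρ) (he : ContinuousOn e (closedBall 0 ρ))
    (hb : ∀ x ∈ closedBall 0 ρ, ‖e x‖ ≤ ρ / 2) : ∃ x ∈ closedBall 0 ρ, x + e x = 0 := by
  obtain ⟨E, hE⟩ := ContinuousMap.exists_restrict_eq (isClosed_closedBall (x := 0) (ε := ρ))
    ⟨_, he.domRestrict⟩
  have hE' : ∀ x ∈ closedBall (0 : EuclideanSpace ℝ (Fin n)) ρ, E x = e x := by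
    intro x hx
    exact DFunLike.congr_fun hE ⟨x, hx⟩
  let χ : ContDiffBump (0 : EuclideanSpace ℝ (Fin n)) :=
    ⟨ρ / 2, ρ, by linarith, by linarith⟩
  obtain ⟨x, hx⟩ := amp_cont (fun x => χ x • E x) (χ.continuous.smul E.continuous)
    χ.hasCompactSupport.smul_right
  have hxρ : ‖x‖ ≤ ρ / 2 := by
    by_cases hxb : ‖x‖ < ρ
    · have hmem : x ∈ closedBall (0 : EuclideanSpace ℝ (Fin n)) ρ :=
        mem_closedBall_zero_iff.2 hxb.le
      have h1 := hb x hmem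
      rw [← hE' x hmem] at h1
      have : x = - (χ x • E x) := eq_neg_of_add_eq_zero_left hx
      rw [this, norm_neg, norm_smul, Real.norm_of_nonneg χ.nonneg]
      have h5 : χ x ≤ 1 := χ.le_one
      have h6 : 0 ≤ χ x := χ.nonneg
      nlinarith [norm_nonneg (E x)]
    · have h0 : χ x = 0 := χ.zero_of_le_dist (by simpa using hxb)
      simp only [h0, zero_smul, add_zero] at hx
      rw [hx, norm_zero]; linarith
  have hmem : x ∈ closedBall (0 : EuclideanSpace ℝ (Fin n)) ρ :=
    mem_closedBall_zero_iff.2 (by linarith)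
  refine ⟨x, hmem, ?_⟩
  rw [← hE' x hmem]
  have : χ x = 1 := χ.one_of_mem_closedBall (mem_closedBall_zero_iff.2 hxρ)
  simpa [this] using hx

lemma amp_sep {V : Type*} [NormedAddCommGroup V] [NormedSpace ℝ V] [FiniteDimensional ℝ V]
    (D : Set V) (h0 : (0 : V) ∈ D) (hD : Convex ℝ D) (hs : ∀ r : ℝ, 0 ≤ r → ∀ c ∈ D, r • c ∈ D)
    (hne : D ≠ univ) : ∃ f : V →ₗ[ℝ] ℝ, f ≠ 0 ∧ ∀ d ∈ D, f d ≤ 0 := by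
  by_cases hinteg : (interior D).Nonempty
  · obtain ⟨x, hx⟩ := (ne_univ_iff_exists_notMem D).1 hne
    obtain ⟨f, hf, hfx⟩ := geometric_hahn_banach_of_nonempty_interior_point hD
      (fun h => hx (interior_subset h)) hinteg
    refine ⟨f, fun h => hf (ContinuousLinearMap.coe_injective h), fun d hd => ?_⟩
    by_contra! hpos
    have hx0 : 0 ≤ f x := by simpa using hfx 0 h0
    change 0 < f d at hpos
    have := hfx _ (hs ((f x + 1) / f d) (by positivity) d hd)
    rw [map_smul, smul_eq_mul, div_mul_cancel₀ _ hpos.ne'] at this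
    linarith
  · rw [hD.interior_nonempty_iff_affineSpan_eq_top,
      AffineSubspace.affineSpan_eq_top_iff_vectorSpan_eq_top_of_nonempty ℝ V V ⟨0, h0⟩] at hinteg
    obtain ⟨f, hf, hfk⟩ := Submodule.exists_le_ker_of_lt_top _ (lt_top_iff_ne_top.2 hinteg)
    refine ⟨f, hf, fun d hd => ?_⟩
    have : d -ᵥ (0 : V) ∈ vectorSpan ℝ D := vsub_mem_vectorSpan ℝ hd h0
    have := hfk this
    simp at this
    exact this.le

lemma amp_core {X : Type*} [NormedAddCommGroup X] [NormedSpace ℝ X] {n : ℕ}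
    (C : Set X) (hC : IsConvexCone C) (L : X →ₗ[ℝ] EuclideanSpace ℝ (Fin n))
    (hL : ∀ z, ∃ c ∈ C, L c = z) (G : X → EuclideanSpace ℝ (Fin n)) (δ : ℝ) (hδ : 0 < δ)
    (hG : ContinuousOn G (C ∩ closedBall 0 δ))
    (ho : ∀ κ > 0, ∃ η > 0, ∀ c ∈ C, ‖c‖ ≤ δ → ‖c‖ < η → ‖G c - L c‖ ≤ κ * ‖c‖)
    (c0 : X) (hc0 : c0 ∈ C) (hLc0 : L c0 = 0) (l : X →L[ℝ] ℝ) (hl : l c0 < 0) :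
    ∃ a > 0, ∀ η > 0, ∃ c ∈ C, ‖c‖ ≤ η ∧ ‖c‖ ≤ δ ∧ G c = 0 ∧ l c < 0 ∧ l c ≤ - a * ‖c‖ := by
  obtain ⟨hC0, hCc, hCs⟩ := hC
  have hadd : ∀ a ∈ C, ∀ b ∈ C, a + b ∈ C := by
    intro a ha b hb
    have h1 := hCc ha hb (by norm_num : (0:ℝ) ≤ 1/2) (by norm_num : (0:ℝ) ≤ 1/2) (by norm_num)
    have h2 := hCs 2 (by norm_num) _ h1
    convert h2 using 1
    rw [smul_add, smul_smul, smul_smul]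
    norm_num
  choose P hPC hPL using hL
  let b : Fin n → EuclideanSpace ℝ (Fin n) := fun j => EuclideanSpace.single j 1
  let σ : EuclideanSpace ℝ (Fin n) → X := fun x =>
    ∑ j, (max (x j) 0 • P (b j) + max (-x j) 0 • P (-b j))
  have hσC : ∀ x, σ x ∈ C := by
    intro x
    refine Finset.sum_induction _ (· ∈ C) (fun a b ha hb => hadd a ha b hb) hC0 ?_
    intro j _
    exact hadd _ (hCs _ (le_max_right _ _) _ (hPC _)) _ (hCs _ (le_max_right _ _) _ (hPC _))
  have hσL : ∀ x, L (σ x) = x := by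
    intro x
    simp only [σ, map_sum, map_add, map_smul, hPL]
    have : ∀ j, max (x j) 0 • b j + max (-x j) 0 • (-b j) = x j • b j := by
      intro j
      rw [smul_neg, ← sub_eq_add_neg, ← sub_smul]
      congr 1
      rcases le_total 0 (x j) with h | h
      · rw [max_eq_left h, max_eq_right (by linarith)]; ring
      · rw [max_eq_right h, max_eq_left (by linarith)]; ring
    simp_rw [this]
    ext i
    simp [b, Finset.sum_apply, Pi.single_apply]
  have hσc : Continuous σ := by
    simp only [σ]
    fun_prop
  have hσ0 : σ 0 = 0 := by simp [σ]
  have hev : ∀ᶠ x in 𝓝 (0 : EuclideanSpace ℝ (Fin n)), ‖σ x‖ < 1 ∧ l (σ x) < - l c0 / 2 := by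
    refine Filter.Eventually.and ?_ ?_
    · exact hσc.norm.continuousAt.eventually (gt_mem_nhds (by simp [hσ0]))
    · exact (l.continuous.comp hσc).continuousAt.eventually
        (gt_mem_nhds (by simp [hσ0]; linarith))
  obtain ⟨ρ', hρ', hball⟩ := Metric.eventually_nhds_iff.1 hev
  set ρ := ρ' / 2 with hρdef
  have hρ : 0 < ρ := by positivity
  have hρb : ∀ x ∈ closedBall (0 : EuclideanSpace ℝ (Fin n)) ρ,
      ‖σ x‖ < 1 ∧ l (σ x) < - l c0 / 2 := by
    intro x hx
    exact hball (lt_of_le_of_lt (mem_closedBall.1 hx) (by linarith))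
  set N := ‖c0‖ + 1 with hN
  have hN0 : 0 < N := by positivity
  have hNb : ∀ x ∈ closedBall (0 : EuclideanSpace ℝ (Fin n)) ρ, ‖c0 + σ x‖ ≤ N := by
    intro x hx
    exact (norm_add_le _ _).trans (by linarith [(hρb x hx).1])
  obtain ⟨η', hη', ho'⟩ := ho (ρ / (2 * N)) (by positivity)
  refine ⟨- l c0 / (2 * N), div_pos (by linarith) (by positivity), ?_⟩
  intro η hη
  set t := min (min η' η) δ / (2 * N) with ht
  have ht0 : 0 < t := by positivity
  have htN : t * N = min (min η' η) δ / 2 := by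
    rw [ht]; field_simp
  have hm0 : 0 < min (min η' η) δ := by positivity
  have htη' : t * N < η' := by
    have : min (min η' η) δ ≤ η' := (min_le_left _ _).trans (min_le_left _ _)
    linarith
  have htη : t * N ≤ η := by
    have : min (min η' η) δ ≤ η := (min_le_left _ _).trans (min_le_right _ _)
    linarith
  have htδ : t * N ≤ δ := by
    have : min (min η' η) δ ≤ δ := min_le_right _ _
    linarith
  let c : EuclideanSpace ℝ (Fin n) → X := fun x => t • (c0 + σ x)
  have hcC : ∀ x, c x ∈ C := fun x => hCs t ht0.le _ (hadd _ hc0 _ (hσC x))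
  have hcn : ∀ x ∈ closedBall (0 : EuclideanSpace ℝ (Fin n)) ρ, ‖c x‖ ≤ t * N := by
    intro x hx
    simp only [c]
    rw [norm_smul, Real.norm_of_nonneg ht0.le]
    exact mul_le_mul_of_nonneg_left (hNb x hx) ht0.le
  have hcL : ∀ x, L (c x) = t • x := by
    intro x
    simp [c, hLc0, hσL]
  obtain ⟨x, hx, hx0⟩ := amp_zero (fun x => t⁻¹ • G (c x) - x) ρ hρ (by
      suffices hGc : ContinuousOn (fun x => G (c x)) (closedBall 0 ρ) from
        (hGc.const_smul t⁻¹).sub continuousOn_id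
      refine hG.comp (by fun_prop) ?_
      intro x hx
      exact ⟨hcC x, mem_closedBall_zero_iff.2 ((hcn x hx).trans htδ)⟩) (by
      intro x hx
      have h1 := ho' (c x) (hcC x) ((hcn x hx).trans htδ) ((hcn x hx).trans_lt htη')
      have h2 : t⁻¹ • G (c x) - x = t⁻¹ • (G (c x) - L (c x)) := by
        rw [hcL, smul_sub, smul_smul, inv_mul_cancel₀ ht0.ne', one_smul]
      rw [h2, norm_smul, norm_inv, Real.norm_of_nonneg ht0.le]
      calc t⁻¹ * ‖G (c x) - L (c x)‖ ≤ t⁻¹ * (ρ / (2 * N) * (t * N)) := by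
            have := hcn x hx
            gcongr
            exact h1.trans (by gcongr)
        _ = ρ / 2 := by field_simp)
  refine ⟨c x, hcC x, (hcn x hx).trans htη, (hcn x hx).trans htδ, ?_, ?_⟩
  · simp only [add_sub_cancel] at hx0
    exact (smul_eq_zero.1 hx0).resolve_left (inv_ne_zero ht0.ne')
  · have h1 : l (c x) = t * (l c0 + l (σ x)) := by simp [c, mul_add]
    have h2 := (hρb x hx).2
    have h3 : l (c x) ≤ t * (l c0 / 2) := by
      rw [h1]
      apply mul_le_mul_of_nonneg_left _ ht0.le
      linarith
    refine ⟨lt_of_le_of_lt h3 (by nlinarith), h3.trans ?_⟩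
    have h4 := hcn x hx
    have h5 : - (- l c0 / (2 * N)) * ‖c x‖ = (l c0 / (2 * N)) * ‖c x‖ := by ring
    rw [h5]
    have h6 : l c0 / (2 * N) ≤ 0 := div_nonpos_of_nonpos_of_nonneg hl.le (by positivity)
    calc t * (l c0 / 2) = l c0 / (2 * N) * (t * N) := by field_simp
      _ ≤ _ := mul_le_mul_of_nonpos_left h4 h6

lemma amp_eps {X Y : Type*} [NormedAddCommGroup X] [NormedAddCommGroup Y] {C : Set X} {δ : ℝ}
    {f : X → Y} (h : f =o[𝓝[C ∩ closedBall 0 δ] 0] (fun c => c)) :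
    ∀ κ > 0, ∃ η > 0, ∀ c ∈ C, ‖c‖ ≤ δ → ‖c‖ < η → ‖f c‖ ≤ κ * ‖c‖ := by
  intro κ hκ
  have := h.def hκ
  rw [eventually_nhdsWithin_iff, Metric.eventually_nhds_iff] at this
  obtain ⟨η, hη, hh⟩ := this
  exact ⟨η, hη, fun c hc hcδ hcη => hh (by simpa using hcη) ⟨hc, by simpa using hcδ⟩⟩

lemma amp_image_cone {X Y : Type*} [AddCommGroup X] [Module ℝ X] [AddCommGroup Y] [Module ℝ Y]
    {C : Set X} (hC : IsConvexCone C) (L : X →ₗ[ℝ] Y) : IsConvexCone (L '' C) := by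
  refine ⟨⟨0, hC.1, map_zero L⟩, hC.2.1.linear_image L, ?_⟩
  rintro r hr _ ⟨c, hc, rfl⟩
  exact ⟨r • c, hC.2.2 r hr c hc, map_smul L r c⟩

/-- Abstract Maximum Principle: given a `𝒰̂`-minimizer `(u⋆, y u⋆)` of `Ψ ∘ y` over the
feasible controls, a subfamily `U⋆ ∋ u⋆` of `𝒰̂`, and Boltyanski approximating cones `S`
(to the target `𝒮`) and `R` (to the reachable set `y '' U⋆`) at `y u⋆`, there is a nonzero
linear form `(lam, lamc)` with `lamc ≤ 0`, `max {(lam + lamc ∇Ψ(y u⋆))·v : v ∈ R} = 0`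
and `lam ∈ -S⊥`. -/
theorem abstract_maximum_principle {n : ℕ}
    (Ω : Set (EuclideanSpace ℝ (Fin n))) (hΩ : IsOpen Ω)
    {𝒰 : Type*} (y : 𝒰 → EuclideanSpace ℝ (Fin n)) (hrange : ∀ u, y u ∈ Ω)
    (𝒮 : Set (EuclideanSpace ℝ (Fin n))) (h𝒮 : 𝒮 ⊆ Ω)
    (Ψ : EuclideanSpace ℝ (Fin n) → ℝ) (hΨ : ∀ x ∈ Ω, DifferentiableAt ℝ Ψ x)
    (Uhat Ustar : Set 𝒰) (hUU : Ustar ⊆ Uhat) (ustar : 𝒰) (hustar : ustar ∈ Ustar)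
    (hfeas : y ustar ∈ 𝒮)
    (hmin : ∀ u ∈ Uhat, y u ∈ 𝒮 → Ψ (y ustar) ≤ Ψ (y u))
    (S R : Set (EuclideanSpace ℝ (Fin n)))
    (hS : IsBoltyanskiCone 𝒮 (y ustar) S)
    (hR : IsBoltyanskiCone (y '' Ustar) (y ustar) R) :
    ∃ (lam : Module.Dual ℝ (EuclideanSpace ℝ (Fin n))) (lamc : ℝ),
      lamc ≤ 0 ∧
      -- Nontriviality
      ¬(lam = 0 ∧ lamc = 0) ∧
      -- Maximization: sup over R of (lam + lamc ∇Ψ(y⋆))·v equals 0 and is attained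
      (∀ v ∈ R, lam v + lamc * (fderiv ℝ Ψ (y ustar)) v ≤ 0) ∧
      (∃ v ∈ R, lam v + lamc * (fderiv ℝ Ψ (y ustar)) v = 0) ∧
      -- Non-transversality: lam ∈ -S⊥
      (∀ w ∈ S, 0 ≤ lam w) := by
  have hdiff := (hΨ _ (hrange ustar)).hasFDerivAt
  set y0 := y ustar with hy0
  set Ψ' := fderiv ℝ Ψ y0 with hΨ'
  obtain ⟨m2, C2, L2, δ2, F2, hC2, hSL, hδ2, hF2c, hF2A, hF20, hF2o⟩ := hS
  obtain ⟨m1, C1, L1, δ1, F1, hC1, hRL, hδ1, hF1c, hF1A, hF10, hF1o⟩ := hR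
  have hRcone : IsConvexCone R := hRL ▸ amp_image_cone hC1 L1
  have hScone : IsConvexCone S := hSL ▸ amp_image_cone hC2 L2
  let D : Set (EuclideanSpace ℝ (Fin n) × ℝ) :=
    {p | ∃ v ∈ R, ∃ w ∈ S, ∃ r : ℝ, 0 ≤ r ∧ p = (v - w, Ψ' v + r)}
  by_cases hDu : D = univ
  · exfalso
    have hmem : ∀ p, p ∈ D := fun p => hDu ▸ mem_univ p
    obtain ⟨v, hv, w, hw, r, hr, hvw⟩ := hmem (0, -1)
    rw [Prod.mk.injEq] at hvw
    obtain ⟨hvw1, hvw2⟩ := hvw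
    rw [hRL] at hv
    rw [hSL] at hw
    obtain ⟨a, ha, rfl⟩ := hv
    obtain ⟨b, hb, rfl⟩ := hw
    let L1c := LinearMap.toContinuousLinearMap L1
    obtain ⟨α, hα, hcore⟩ := amp_core (X := EuclideanSpace ℝ (Fin m1) × EuclideanSpace ℝ (Fin m2))
      (C1 ×ˢ C2)
      ⟨⟨hC1.1, hC2.1⟩, hC1.2.1.prod hC2.2.1,
        fun r hr c hc => ⟨hC1.2.2 r hr _ hc.1, hC2.2.2 r hr _ hc.2⟩⟩
      (L1.comp (LinearMap.fst ℝ _ _) - L2.comp (LinearMap.snd ℝ _ _)) (by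
        intro z
        obtain ⟨v, hv, w, hw, r, hr, hvw⟩ := hmem (z, 0)
        rw [Prod.mk.injEq] at hvw
        rw [hRL] at hv
        rw [hSL] at hw
        obtain ⟨a, ha, rfl⟩ := hv
        obtain ⟨b, hb, rfl⟩ := hw
        exact ⟨(a, b), ⟨ha, hb⟩, by simp [hvw.1]⟩)
      (fun c => F1 c.1 - F2 c.2) (min δ1 δ2) (lt_min hδ1 hδ2) (by
        refine ContinuousOn.sub (hF1c.comp continuousOn_fst ?_) (hF2c.comp continuousOn_snd ?_)
        · rintro c ⟨hc, hcδ⟩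
          rw [mem_closedBall_zero_iff] at hcδ
          exact ⟨hc.1, mem_closedBall_zero_iff.2
            ((norm_fst_le c).trans (hcδ.trans (min_le_left _ _)))⟩
        · rintro c ⟨hc, hcδ⟩
          rw [mem_closedBall_zero_iff] at hcδ
          exact ⟨hc.2, mem_closedBall_zero_iff.2
            ((norm_snd_le c).trans (hcδ.trans (min_le_right _ _)))⟩) (by
        intro κ hκ
        obtain ⟨η1, hη1, h1⟩ := amp_eps hF1o (κ / 2) (by positivity)
        obtain ⟨η2, hη2, h2⟩ := amp_eps hF2o (κ / 2) (by positivity)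
        refine ⟨min η1 η2, lt_min hη1 hη2, ?_⟩
        intro c hc hcδ hcη
        have e1 := h1 c.1 hc.1 ((norm_fst_le c).trans (hcδ.trans (min_le_left _ _)))
          ((norm_fst_le c).trans_lt (hcη.trans_le (min_le_left _ _)))
        have e2 := h2 c.2 hc.2 ((norm_snd_le c).trans (hcδ.trans (min_le_right _ _)))
          ((norm_snd_le c).trans_lt (hcη.trans_le (min_le_right _ _)))
        have e3 : F1 c.1 - F2 c.2 - (L1.comp (LinearMap.fst ℝ (EuclideanSpace ℝ (Fin m1))
            (EuclideanSpace ℝ (Fin m2))) - L2.comp (LinearMap.snd ℝ (EuclideanSpace ℝ (Fin m1))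
            (EuclideanSpace ℝ (Fin m2)))) c
            = (F1 c.1 - y0 - L1 c.1) - (F2 c.2 - y0 - L2 c.2) := by
          simp only [LinearMap.sub_apply, LinearMap.comp_apply, LinearMap.fst_apply,
            LinearMap.snd_apply]
          abel
        rw [e3]
        refine (norm_sub_le _ _).trans ?_
        have e4 := norm_fst_le c
        have e5 := norm_snd_le c
        nlinarith)
      (a, b) ⟨ha, hb⟩ (by simpa using hvw1.symm)
      ((Ψ'.comp L1c).comp (ContinuousLinearMap.fst ℝ _ _)) (by
        simp [L1c]
        linarith)
    -- first-order expansion of `Ψ ∘ F1`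
    have hexp : ∀ κ > 0, ∃ η > 0, ∀ c ∈ C1, ‖c‖ ≤ δ1 → ‖c‖ < η →
        ‖Ψ (F1 c) - Ψ y0 - Ψ' (L1 c)‖ ≤ κ * ‖c‖ := by
      have hderF : HasFDerivWithinAt F1 L1c (C1 ∩ closedBall 0 δ1) 0 := by
        rw [hasFDerivWithinAt_iff_isLittleO]
        simpa [hF10, L1c] using hF1o
      have hd0 : HasFDerivAt Ψ Ψ' (F1 0) := by rw [hF10]; exact hdiff
      have hcomp := hd0.comp_hasFDerivWithinAt (0 : EuclideanSpace ℝ (Fin m1)) hderF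
      rw [hasFDerivWithinAt_iff_isLittleO] at hcomp
      apply amp_eps
      simpa [hF10, L1c] using hcomp
    obtain ⟨η, hη, hη'⟩ := hexp (α / 2) (by positivity)
    obtain ⟨c, hc, hcη, hcδ, hc0, hneg, hcl⟩ := hcore (η / 2) (by positivity)
    have hc1 : ‖c.1‖ ≤ δ1 := (norm_fst_le c).trans (hcδ.trans (min_le_left _ _))
    have hc2 : ‖c.2‖ ≤ δ2 := (norm_snd_le c).trans (hcδ.trans (min_le_right _ _))
    have hexp := hη' c.1 hc.1 hc1 ((norm_fst_le c).trans_lt (by linarith))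
    obtain ⟨u, hu, huF⟩ := hF1A c.1 ⟨hc.1, mem_closedBall_zero_iff.2 hc1⟩
    have hFS := hF2A c.2 ⟨hc.2, mem_closedBall_zero_iff.2 hc2⟩
    have hFF : F1 c.1 = F2 c.2 := sub_eq_zero.1 hc0
    have hmin' := hmin u (hUU hu) (by rw [huF, hFF]; exact hFS)
    rw [huF] at hmin'
    change Ψ' (L1 c.1) < 0 at hneg
    change Ψ' (L1 c.1) ≤ -α * ‖c‖ at hcl
    have h6 := (le_abs_self _).trans hexp
    have h7 := norm_fst_le c
    nlinarith [norm_nonneg c]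
  · obtain ⟨f, hf, hfD⟩ := amp_sep D
      ⟨0, hRcone.1, 0, hScone.1, 0, le_rfl, by simp; rfl⟩ (by
        rintro _ ⟨v, hv, w, hw, r, hr, rfl⟩ _ ⟨v', hv', w', hw', r', hr', rfl⟩ s s' hs hs' hss
        refine ⟨s • v + s' • v', hRcone.2.1 hv hv' hs hs' hss, s • w + s' • w',
          hScone.2.1 hw hw' hs hs' hss, s * r + s' * r', by positivity, ?_⟩
        ext1
        · simp only [Prod.fst_add, Prod.smul_fst, smul_sub]; abel
        · simp; ring) (by
        rintro s hs _ ⟨v, hv, w, hw, r, hr, rfl⟩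
        refine ⟨s • v, hRcone.2.2 s hs v hv, s • w, hScone.2.2 s hs w hw, s * r,
          by positivity, ?_⟩
        ext1
        · simp [smul_sub]
        · simp; ring) hDu
    have hsplit : ∀ v s, f (v, s) = f (v, 0) + f (0, 1) * s := by
      intro v s
      have : ((v, s) : EuclideanSpace ℝ (Fin n) × ℝ) = (v, 0) + s • (0, 1) := by simp
      rw [this, map_add, map_smul, smul_eq_mul, mul_comm]
    refine ⟨f.comp (LinearMap.inl ℝ _ _), f (0, 1), ?_, ?_, ?_, ?_, ?_⟩
    · have := hfD (0, 1) ⟨0, hRcone.1, 0, hScone.1, 1, zero_le_one, by simp⟩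
      exact this
    · rintro ⟨h1, h2⟩
      apply hf
      ext v
      · exact LinearMap.congr_fun h1 v
      · simpa using h2
    · intro v hv
      have := hfD (v, Ψ' v) ⟨v, hv, 0, hScone.1, 0, le_rfl, by simp⟩
      rw [hsplit] at this
      simpa using this
    · exact ⟨0, hRcone.1, by simp; exact map_zero f⟩
    · intro w hw
      have := hfD (-w, 0) ⟨0, hRcone.1, w, hw, 0, le_rfl, by simp⟩
      rw [show ((-w, 0) : EuclideanSpace ℝ (Fin n) × ℝ) = -(w, 0) by simp, map_neg] at this
      simpa using this
end
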